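/- arXiv:2303.03325 — 5 statements merged into one kernel-verified Lean document; each statement's English description precedes it below -/
import Mathlib

section
/- Let f₁,…,f_{d+1} be Nash functions on an open set U ⊆ ℝ^d, and let U' := {x ∈ U : det ∂(f₂,…,f_{d+1})/∂x (x) ≠ 0}. Then the function φ(x) := det ∂(f₁,…,f_d)/∂x (x) · (det ∂(f₂,…,f_{d+1})/∂x (x))^{-1} is a Nash function on U', and its complexity satisfies c(φ) ≤ (c(f₁) ⋯ c(f_{d+1}))². -/
noncomputable section

open scoped BigOperators

namespace StatementThirteen

/-- `Φ` is an algebraic lifting map on `U` with annihilating polynomial map `p`. -/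
def IsAlgLift (d M : ℕ) (U : Set (Fin d → ℝ)) (Φ : (Fin d → ℝ) → Fin M → ℝ)
    (p : Fin M → MvPolynomial (Fin d ⊕ Fin M) ℝ) : Prop :=
  AnalyticOnNhd ℝ Φ U ∧
  (∀ x ∈ U, ∀ j, MvPolynomial.eval (Sum.elim x (Φ x)) (p j) = 0) ∧
  (∀ V : Set (Fin d → ℝ), IsOpen V → V ⊆ U → V.Nonempty →
    ∃ x ∈ V, Matrix.det (Matrix.of fun j j' : Fin M =>
      MvPolynomial.eval (Sum.elim x (Φ x)) (MvPolynomial.pderiv (Sum.inr j') (p j))) ≠ 0)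

/-- `f` lifts to the polynomial `F` via the algebraic lifting map `Φ` with
annihilating map `p`. -/
def IsNashRep (d M : ℕ) (U : Set (Fin d → ℝ)) (f : (Fin d → ℝ) → ℝ)
    (Φ : (Fin d → ℝ) → Fin M → ℝ)
    (p : Fin M → MvPolynomial (Fin d ⊕ Fin M) ℝ)
    (F : MvPolynomial (Fin d ⊕ Fin M) ℝ) : Prop :=
  IsAlgLift d M U Φ p ∧ ∀ x ∈ U, f x = MvPolynomial.eval (Sum.elim x (Φ x)) F

/-- `f` is a Nash function on `U`. -/
def IsNash (d : ℕ) (U : Set (Fin d → ℝ)) (f : (Fin d → ℝ) → ℝ) : Prop :=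
  ∃ (M : ℕ) (Φ : (Fin d → ℝ) → Fin M → ℝ)
    (p : Fin M → MvPolynomial (Fin d ⊕ Fin M) ℝ)
    (F : MvPolynomial (Fin d ⊕ Fin M) ℝ), IsNashRep d M U f Φ p F

open Classical in
/-- The complexity of a Nash function: the minimum of `deg F · deg p¹ ⋯ deg p^M`
over all representations; the zero function has complexity `0`. -/
def complexity (d : ℕ) (U : Set (Fin d → ℝ)) (f : (Fin d → ℝ) → ℝ) : ℕ :=
  if ∀ x ∈ U, f x = 0 then 0
  else sInf { c : ℕ | ∃ (M : ℕ) (Φ : (Fin d → ℝ) → Fin M → ℝ)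
    (p : Fin M → MvPolynomial (Fin d ⊕ Fin M) ℝ)
    (F : MvPolynomial (Fin d ⊕ Fin M) ℝ), IsNashRep d M U f Φ p F ∧
    c = F.totalDegree * ∏ j, (p j).totalDegree }

/-- The Jacobian determinant of a `d`-tuple of functions. -/
def jacDet (d : ℕ) (g : Fin d → (Fin d → ℝ) → ℝ) (x : Fin d → ℝ) : ℝ :=
  Matrix.det (Matrix.of fun i j : Fin d => fderiv ℝ (g i) x (Pi.single j 1))

/-- Version of `IsAlgLift` over an arbitrary finite index type. -/
def GLift (d : ℕ) (ι : Type) [Fintype ι] [DecidableEq ι] (U : Set (Fin d → ℝ))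
    (Φ : (Fin d → ℝ) → ι → ℝ) (p : ι → MvPolynomial (Fin d ⊕ ι) ℝ) : Prop :=
  AnalyticOnNhd ℝ Φ U ∧
  (∀ x ∈ U, ∀ j, MvPolynomial.eval (Sum.elim x (Φ x)) (p j) = 0) ∧
  (∀ V : Set (Fin d → ℝ), IsOpen V → V ⊆ U → V.Nonempty →
    ∃ x ∈ V, Matrix.det (Matrix.of fun j j' : ι =>
      MvPolynomial.eval (Sum.elim x (Φ x)) (MvPolynomial.pderiv (Sum.inr j') (p j))) ≠ 0)

lemma pderiv_rename_zero {σ τ : Type*} (f : σ → τ) (c : τ) (hc : ∀ a, f a ≠ c)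
    (p : MvPolynomial σ ℝ) : MvPolynomial.pderiv c (MvPolynomial.rename f p) = 0 := by
  classical
  apply MvPolynomial.pderiv_eq_zero_of_notMem_vars
  intro h
  obtain ⟨a, -, ha⟩ := Finset.mem_image.1 (MvPolynomial.vars_rename _ _ h)
  exact hc a ha

lemma totalDegree_pderiv_le {σ : Type*} (i : σ) (p : MvPolynomial σ ℝ) :
    (MvPolynomial.pderiv i p).totalDegree ≤ p.totalDegree - 1 := by
  classical
  rw [MvPolynomial.totalDegree]
  apply Finset.sup_le
  intro m hm
  rw [MvPolynomial.mem_support_iff, MvPolynomial.coeff_pderiv] at hm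
  have h1 : m + Finsupp.single i 1 ∈ p.support := by
    rw [MvPolynomial.mem_support_iff]
    exact left_ne_zero_of_mul hm
  have h2 := MvPolynomial.le_totalDegree h1
  rw [Finsupp.sum_add_index' (by simp) (by simp)] at h2
  simp at h2
  simp
  omega

lemma totalDegree_det_le {σ n : Type*} [Fintype n] [DecidableEq n]
    (A : Matrix n n (MvPolynomial σ ℝ)) (b : n → ℕ) (h : ∀ i j, (A i j).totalDegree ≤ b i) :
    A.det.totalDegree ≤ ∑ i, b i := by
  rw [Matrix.det_apply]
  apply MvPolynomial.totalDegree_finsetSum_le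
  intro e _
  have h1 : (∏ i, A (e i) i).totalDegree ≤ ∑ i, b i := by
    refine (MvPolynomial.totalDegree_finsetProd _ _).trans ?_
    rw [← Equiv.sum_comp e b]
    exact Finset.sum_le_sum fun i _ => h _ _
  rcases Int.units_eq_one_or (Equiv.Perm.sign e) with h2 | h2 <;> rw [h2] <;> simpa using h1

lemma one_add_sum_le {n : Type*} (s : Finset n) (b : n → ℕ) (hb : ∀ i ∈ s, 1 ≤ b i) :
    1 + ∑ i ∈ s, (b i - 1) ≤ ∏ i ∈ s, b i := by
  classical
  induction s using Finset.induction_on with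
  | empty => simp
  | insert a s ha ih =>
    rw [Finset.sum_insert ha, Finset.prod_insert ha]
    have h1 := ih fun i hi => hb i (Finset.mem_insert_of_mem hi)
    have h2 := hb a (Finset.mem_insert_self _ _)
    obtain ⟨k, hk⟩ := Nat.exists_eq_add_of_le h2
    rw [hk]
    have : 1 + k - 1 = k := by omega
    rw [this]
    have h3 : k * 1 ≤ k * ∏ i ∈ s, b i := Nat.mul_le_mul_left k (by omega)
    rw [add_mul, one_mul]
    omega

lemma GLift.toFin {d : ℕ} {ι : Type} [Fintype ι] [DecidableEq ι] {U : Set (Fin d → ℝ)}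
    {Φ : (Fin d → ℝ) → ι → ℝ} {p : ι → MvPolynomial (Fin d ⊕ ι) ℝ}
    (h : GLift d ι U Φ p) (f : (Fin d → ℝ) → ℝ) (F : MvPolynomial (Fin d ⊕ ι) ℝ)
    (hF : ∀ x ∈ U, f x = MvPolynomial.eval (Sum.elim x (Φ x)) F) :
    ∃ (M : ℕ) (Φ' : (Fin d → ℝ) → Fin M → ℝ)
      (p' : Fin M → MvPolynomial (Fin d ⊕ Fin M) ℝ)
      (F' : MvPolynomial (Fin d ⊕ Fin M) ℝ), IsNashRep d M U f Φ' p' F' ∧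
      F'.totalDegree * ∏ j, (p' j).totalDegree ≤ F.totalDegree * ∏ j, (p j).totalDegree := by
  let e := Fintype.equivFin ι
  let r : Fin d ⊕ ι → Fin d ⊕ Fin (Fintype.card ι) := Sum.map id e
  have hr : Function.Injective r := Sum.map_injective.2 ⟨Function.injective_id, e.injective⟩
  have hev : ∀ x, (Sum.elim x (fun k => Φ x (e.symm k))) ∘ r = Sum.elim x (Φ x) := by
    intro x; ext (a | a) <;> simp [r]
  refine ⟨Fintype.card ι, fun x k => Φ x (e.symm k),
    fun k => MvPolynomial.rename r (p (e.symm k)), MvPolynomial.rename r F,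
    ⟨⟨?_, ?_, ?_⟩, ?_⟩, ?_⟩
  · have := analyticOnNhd_pi_iff.1 h.1
    exact analyticOnNhd_pi_iff.2 fun k => this (e.symm k)
  · intro x hx j
    rw [MvPolynomial.eval_rename, hev]
    exact h.2.1 x hx _
  · intro V hV hVU hne
    obtain ⟨x, hx, hdet⟩ := h.2.2 V hV hVU hne
    refine ⟨x, hx, ?_⟩
    rw [← Matrix.det_submatrix_equiv_self e.symm] at hdet
    convert hdet using 2
    ext j j'
    have : (Sum.inr j' : Fin d ⊕ Fin (Fintype.card ι)) = r (Sum.inr (e.symm j')) := by simp [r]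
    simp only [Matrix.of_apply, Matrix.submatrix_apply]
    rw [this, MvPolynomial.pderiv_rename hr, MvPolynomial.eval_rename, hev]
  · intro x hx
    rw [MvPolynomial.eval_rename, hev]
    exact hF x hx
  · rw [← Equiv.prod_comp e.symm (fun j => (p j).totalDegree)]
    gcongr
    · exact MvPolynomial.totalDegree_rename_le _ _
    · exact MvPolynomial.totalDegree_rename_le _ _

lemma hasFDerivAt_eval {E : Type*} [NormedAddCommGroup E] [NormedSpace ℝ E] {σ : Type*}
    [Fintype σ] (s : E → σ → ℝ) (s' : σ → E →L[ℝ] ℝ) (x : E)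
    (h : ∀ c, HasFDerivAt (fun y => s y c) (s' c) x) (Q : MvPolynomial σ ℝ) :
    HasFDerivAt (fun y => MvPolynomial.eval (s y) Q)
      (∑ c, MvPolynomial.eval (s x) (MvPolynomial.pderiv c Q) • s' c) x := by
  classical
  induction Q using MvPolynomial.induction_on with
  | C a => simpa using hasFDerivAt_const a x
  | add p q hp hq =>
    simp only [map_add, add_smul, Finset.sum_add_distrib]
    exact hp.add hq
  | mul_X p i hp =>
    have := hp.mul (h i)
    simp only [map_mul, MvPolynomial.eval_X]
    refine HasFDerivAt.congr_fderiv (f := fun y => MvPolynomial.eval (s y) p * s y i) this ?_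
    symm
    simp only [MvPolynomial.pderiv_mul, map_add, map_mul, MvPolynomial.eval_X, add_smul,
      Finset.sum_add_distrib, MvPolynomial.pderiv_X, Pi.single_apply, Finset.smul_sum]
    rw [add_comm]
    congr 1
    · rw [Finset.sum_eq_single i]
      · simp
      · intro b _ hb
        simp [hb.symm]
      · simp
    · refine Finset.sum_congr rfl fun c _ => ?_
      rw [smul_smul, mul_comm]

lemma analyticAt_eval {d : ℕ} {ι : Type} [Fintype ι] {Φ : (Fin d → ℝ) → ι → ℝ}
    {x : Fin d → ℝ} (h : AnalyticAt ℝ Φ x) (Q : MvPolynomial (Fin d ⊕ ι) ℝ) :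
    AnalyticAt ℝ (fun y => MvPolynomial.eval (Sum.elim y (Φ y)) Q) x := by
  have := AnalyticAt.aeval_mvPolynomial (𝕜 := ℝ) (f := fun y => Sum.elim y (Φ y)) (z := x) ?_ Q
  · simpa [MvPolynomial.aeval_eq_eval] using this
  · rintro (i | i)
    · exact (ContinuousLinearMap.proj (R := ℝ) (φ := fun _ : Fin d => ℝ) i).analyticAt x
    · exact analyticAt_pi_iff.1 h i

lemma analyticAt_det {d : ℕ} {n : Type*} [Fintype n] [DecidableEq n]
    (A : (Fin d → ℝ) → Matrix n n ℝ) (x : Fin d → ℝ)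
    (h : ∀ i j, AnalyticAt ℝ (fun y => A y i j) x) : AnalyticAt ℝ (fun y => (A y).det) x := by
  simp only [Matrix.det_apply, Units.smul_def, zsmul_eq_mul]
  refine Finset.analyticAt_fun_sum _ fun e _ => ?_
  exact analyticAt_const.mul (Finset.analyticAt_fun_prod _ fun i _ => h _ _)

/-- The determinant of all partial derivatives of the system `(G, P)`. -/
def bigDet (d : ℕ) (ι : Type) [Fintype ι] [DecidableEq ι]
    (G : Fin d → MvPolynomial (Fin d ⊕ ι) ℝ) (P : ι → MvPolynomial (Fin d ⊕ ι) ℝ) :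
    MvPolynomial (Fin d ⊕ ι) ℝ :=
  Matrix.det (Matrix.of fun r c : Fin d ⊕ ι => MvPolynomial.pderiv c (Sum.elim G P r))

lemma jac_mul {d : ℕ} {ι : Type} [Fintype ι] [DecidableEq ι] {U : Set (Fin d → ℝ)}
    (hU : IsOpen U) {Φ : (Fin d → ℝ) → ι → ℝ} {P : ι → MvPolynomial (Fin d ⊕ ι) ℝ}
    (h : GLift d ι U Φ P) (g : Fin d → (Fin d → ℝ) → ℝ) (G : Fin d → MvPolynomial (Fin d ⊕ ι) ℝ)
    (hG : ∀ i, ∀ x ∈ U, g i x = MvPolynomial.eval (Sum.elim x (Φ x)) (G i))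
    (x : Fin d → ℝ) (hx : x ∈ U) :
    MvPolynomial.eval (Sum.elim x (Φ x)) (bigDet d ι G P) =
      jacDet d g x * Matrix.det (Matrix.of fun j j' : ι =>
      MvPolynomial.eval (Sum.elim x (Φ x)) (MvPolynomial.pderiv (Sum.inr j') (P j))) := by
  have hΦ : ∀ k, HasFDerivAt (fun y => Φ y k) (fderiv ℝ (fun y => Φ y k) x) x := fun k =>
    (analyticAt_pi_iff.1 (h.1 x hx) k).differentiableAt.hasFDerivAt
  have key : ∀ Q, HasFDerivAt (fun y => MvPolynomial.eval (Sum.elim y (Φ y)) Q) _ x :=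
    hasFDerivAt_eval (fun y => Sum.elim y (Φ y))
      (Sum.elim (fun i => ContinuousLinearMap.proj (R := ℝ) (φ := fun _ : Fin d => ℝ) i)
        (fun k => fderiv ℝ (fun y => Φ y k) x)) x (by
          rintro (i | k)
          · exact (ContinuousLinearMap.proj (R := ℝ) (φ := fun _ : Fin d => ℝ) i).hasFDerivAt
          · exact hΦ k)
  have key2 : ∀ (Q : MvPolynomial (Fin d ⊕ ι) ℝ) (u : (Fin d → ℝ) → ℝ),
      (∀ y ∈ U, u y = MvPolynomial.eval (Sum.elim y (Φ y)) Q) → ∀ j : Fin d,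
      fderiv ℝ u x (Pi.single j 1) =
      MvPolynomial.eval (Sum.elim x (Φ x)) (MvPolynomial.pderiv (Sum.inl j) Q) +
      ∑ k, MvPolynomial.eval (Sum.elim x (Φ x)) (MvPolynomial.pderiv (Sum.inr k) Q) *
        fderiv ℝ (fun y => Φ y k) x (Pi.single j 1) := by
    intro Q u hu j
    have he : u =ᶠ[nhds x] fun y => MvPolynomial.eval (Sum.elim y (Φ y)) Q := by
      filter_upwards [hU.mem_nhds hx] with y hy using hu y hy
    rw [he.fderiv_eq, (key Q).fderiv]
    simp [Fintype.sum_sum_type, Pi.single_apply]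
  let ev := MvPolynomial.eval (Sum.elim x (Φ x))
  let N : Matrix ι (Fin d) ℝ := Matrix.of fun k j => fderiv ℝ (fun y => Φ y k) x (Pi.single j 1)
  let DyP : Matrix ι ι ℝ := Matrix.of fun j j' => ev (MvPolynomial.pderiv (Sum.inr j') (P j))
  let DxP : Matrix ι (Fin d) ℝ := Matrix.of fun j j' => ev (MvPolynomial.pderiv (Sum.inl j') (P j))
  let DyG : Matrix (Fin d) ι ℝ := Matrix.of fun j j' => ev (MvPolynomial.pderiv (Sum.inr j') (G j))
  let DxG : Matrix (Fin d) (Fin d) ℝ :=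
    Matrix.of fun j j' => ev (MvPolynomial.pderiv (Sum.inl j') (G j))
  let J : Matrix (Fin d) (Fin d) ℝ :=
    Matrix.of fun i j : Fin d => fderiv ℝ (g i) x (Pi.single j 1)
  have hbig : ev (bigDet d ι G P) = (Matrix.fromBlocks DxG DyG DxP DyP).det := by
    rw [bigDet, RingHom.map_det]
    congr 1
    ext (i | i) (j | j) <;> rfl
  have hmul : Matrix.fromBlocks DxG DyG DxP DyP * Matrix.fromBlocks 1 0 N 1 =
      Matrix.fromBlocks J DyG 0 DyP := by
    rw [Matrix.fromBlocks_multiply]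
    congr 1
    · ext i j
      simp only [Matrix.mul_one, Matrix.add_apply, Matrix.mul_apply, J, DxG, DyG, N,
        Matrix.of_apply]
      exact (key2 (G i) (g i) (hG i) j).symm
    · simp
    · ext i j
      have := key2 (P i) (fun _ => 0) (fun y hy => (h.2.1 y hy i).symm) j
      simp only [Matrix.mul_one, Matrix.add_apply, Matrix.mul_apply, DxP, DyP, N,
        Matrix.of_apply, Matrix.zero_apply]
      rw [← this]
      simp
    · simp
  change ev (bigDet d ι G P) = J.det * DyP.det
  have := congrArg Matrix.det hmul
  rw [Matrix.det_mul, Matrix.det_fromBlocks_zero₁₂, Matrix.det_fromBlocks_zero₂₁] at this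
  rw [hbig]
  simpa using this

lemma bigDet_degree {d : ℕ} {ι : Type} [Fintype ι] [DecidableEq ι]
    (G : Fin d → MvPolynomial (Fin d ⊕ ι) ℝ) (P : ι → MvPolynomial (Fin d ⊕ ι) ℝ)
    (a : Fin d → ℕ) (b : ι → ℕ) (ha : ∀ i, (G i).totalDegree ≤ a i)
    (hb : ∀ i, (P i).totalDegree ≤ b i) :
    (bigDet d ι G P).totalDegree ≤ ∑ i, (a i - 1) + ∑ k, (b k - 1) := by
  have := totalDegree_det_le (Matrix.of fun r c : Fin d ⊕ ι =>
    MvPolynomial.pderiv c (Sum.elim G P r)) (Sum.elim (fun i => a i - 1) (fun k => b k - 1)) ?_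
  · rw [bigDet]
    simpa [Fintype.sum_sum_type] using this
  · rintro (i | k) c
    · refine (totalDegree_pderiv_le _ _).trans ?_
      exact Nat.sub_le_sub_right (ha i) 1
    · refine (totalDegree_pderiv_le _ _).trans ?_
      exact Nat.sub_le_sub_right (hb k) 1

lemma jacDet_analytic {d : ℕ} {U : Set (Fin d → ℝ)} (g : Fin d → (Fin d → ℝ) → ℝ)
    (hg : ∀ i, AnalyticOnNhd ℝ (g i) U) (x : Fin d → ℝ) (hx : x ∈ U) :
    AnalyticAt ℝ (jacDet d g) x := by
  refine analyticAt_det (fun y => Matrix.of fun i j : Fin d => fderiv ℝ (g i) y (Pi.single j 1)) x ?_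
  intro i j
  have h1 : AnalyticAt ℝ (fderiv ℝ (g i)) x := (hg i x hx).fderiv
  exact ((ContinuousLinearMap.apply ℝ ℝ (Pi.single j 1 : Fin d → ℝ)).analyticAt _).comp h1

lemma core {d : ℕ} {ι : Type} [Fintype ι] [DecidableEq ι] {U : Set (Fin d → ℝ)}
    (hU : IsOpen U) {Φ : (Fin d → ℝ) → ι → ℝ} {P : ι → MvPolynomial (Fin d ⊕ ι) ℝ}
    (h : GLift d ι U Φ P) (f : Fin (d + 1) → (Fin d → ℝ) → ℝ)
    (F : Fin (d + 1) → MvPolynomial (Fin d ⊕ ι) ℝ)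
    (hF : ∀ i, ∀ x ∈ U, f i x = MvPolynomial.eval (Sum.elim x (Φ x)) (F i)) :
    ∃ (Φ' : (Fin d → ℝ) → ι ⊕ Unit → ℝ)
      (p' : ι ⊕ Unit → MvPolynomial (Fin d ⊕ (ι ⊕ Unit)) ℝ)
      (F' : MvPolynomial (Fin d ⊕ (ι ⊕ Unit)) ℝ),
      GLift d (ι ⊕ Unit) { x : Fin d → ℝ | x ∈ U ∧ jacDet d (fun i => f i.succ) x ≠ 0 } Φ' p' ∧
      (∀ x ∈ { x : Fin d → ℝ | x ∈ U ∧ jacDet d (fun i => f i.succ) x ≠ 0 },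
        jacDet d (fun i => f i.castSucc) x / jacDet d (fun i => f i.succ) x =
        MvPolynomial.eval (Sum.elim x (Φ' x)) F') ∧
      ∀ (a : Fin (d + 1) → ℕ) (b : ι → ℕ), (∀ i, (F i).totalDegree ≤ a i) →
        (∀ k, (P k).totalDegree ≤ b k) → (∀ i, 1 ≤ a i) → (∀ k, 1 ≤ b k) →
        F'.totalDegree * ∏ j, (p' j).totalDegree ≤ (∏ k, b k) * ((∏ i, a i) * ∏ k, b k) := by
  let J1 := jacDet d (fun i => f i.castSucc)
  let J2 := jacDet d (fun i => f i.succ)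
  let A := bigDet d ι (fun i => F i.castSucc) P
  let B := bigDet d ι (fun i => F i.succ) P
  let D : (Fin d → ℝ) → ℝ := fun x => Matrix.det (Matrix.of fun j j' : ι =>
      MvPolynomial.eval (Sum.elim x (Φ x)) (MvPolynomial.pderiv (Sum.inr j') (P j)))
  have hA : ∀ x ∈ U, MvPolynomial.eval (Sum.elim x (Φ x)) A = J1 x * D x := fun x hx =>
    jac_mul hU h _ _ (fun i => hF i.castSucc) x hx
  have hB : ∀ x ∈ U, MvPolynomial.eval (Sum.elim x (Φ x)) B = J2 x * D x := fun x hx =>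
    jac_mul hU h _ _ (fun i => hF i.succ) x hx
  have hfan : ∀ i, AnalyticOnNhd ℝ (f i) U := by
    intro i x hx
    refine (analyticAt_eval (h.1 x hx) (F i)).congr ?_
    filter_upwards [hU.mem_nhds hx] with y hy using (hF i y hy).symm
  let r : Fin d ⊕ ι → Fin d ⊕ (ι ⊕ Unit) := Sum.map id Sum.inl
  have hr : Function.Injective r := Sum.map_injective.2 ⟨Function.injective_id, Sum.inl_injective⟩
  let z : Fin d ⊕ (ι ⊕ Unit) := Sum.inr (Sum.inr ())
  have hz : ∀ c, r c ≠ z := by rintro (c | c) <;> simp [r, z]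
  let Φ' : (Fin d → ℝ) → ι ⊕ Unit → ℝ := fun x => Sum.elim (Φ x) (fun _ => J1 x / J2 x)
  have hev : ∀ x, (Sum.elim x (Φ' x)) ∘ r = Sum.elim x (Φ x) := by
    intro x; ext (c | c) <;> simp [r, Φ']
  let q : MvPolynomial (Fin d ⊕ (ι ⊕ Unit)) ℝ :=
    MvPolynomial.rename r B * MvPolynomial.X z - MvPolynomial.rename r A
  let p' : ι ⊕ Unit → MvPolynomial (Fin d ⊕ (ι ⊕ Unit)) ℝ :=
    Sum.elim (fun k => MvPolynomial.rename r (P k)) (fun _ => q)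
  refine ⟨Φ', p', MvPolynomial.X z, ⟨?_, ?_, ?_⟩, ?_, ?_⟩
  · apply analyticOnNhd_pi_iff.2
    rintro (k | k)
    · exact fun x hx => analyticAt_pi_iff.1 (h.1 x hx.1) k
    · intro x hx
      exact (jacDet_analytic _ (fun i => hfan i.castSucc) x hx.1).div
        (jacDet_analytic _ (fun i => hfan i.succ) x hx.1) hx.2
  · rintro x hx (k | k)
    · simp only [p', Sum.elim_inl]
      rw [MvPolynomial.eval_rename, hev]
      exact h.2.1 x hx.1 k
    · simp only [p', Sum.elim_inr, q, map_sub, map_mul, MvPolynomial.eval_X,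
        MvPolynomial.eval_rename, hev, hA x hx.1, hB x hx.1]
      have h2 : J2 x ≠ 0 := hx.2
      simp only [z, Φ', Sum.elim_inr]
      field_simp
      ring
  · intro V hV hVU hne
    obtain ⟨x, hx, hdet⟩ := h.2.2 V hV (fun y hy => (hVU hy).1) hne
    refine ⟨x, hx, ?_⟩
    have h2 : J2 x ≠ 0 := (hVU hx).2
    have hBx := hB x (hVU hx).1
    let DyP : Matrix ι ι ℝ := Matrix.of fun j j' =>
      MvPolynomial.eval (Sum.elim x (Φ x)) (MvPolynomial.pderiv (Sum.inr j') (P j))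
    let R : Matrix Unit ι ℝ := Matrix.of fun j j' =>
      MvPolynomial.eval (Sum.elim x (Φ' x)) (MvPolynomial.pderiv (Sum.inr (Sum.inl j')) q)
    let S : Matrix Unit Unit ℝ := Matrix.of fun j j' =>
      MvPolynomial.eval (Sum.elim x (Φ x)) B
    have hM : (Matrix.of fun j j' : ι ⊕ Unit =>
      MvPolynomial.eval (Sum.elim x (Φ' x)) (MvPolynomial.pderiv (Sum.inr j') (p' j))) =
      Matrix.fromBlocks DyP 0 R S := by
      ext (j | j) (j' | j')
      · simp only [Matrix.of_apply, Matrix.fromBlocks_apply₁₁, p', Sum.elim_inl, DyP]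
        have : (Sum.inr (Sum.inl j') : Fin d ⊕ (ι ⊕ Unit)) = r (Sum.inr j') := by simp [r]
        rw [this, MvPolynomial.pderiv_rename hr, MvPolynomial.eval_rename, hev]
      · simp only [Matrix.of_apply, Matrix.fromBlocks_apply₁₂, p', Sum.elim_inl, Matrix.zero_apply]
        rw [pderiv_rename_zero r _ hz]
        simp
      · rfl
      · simp only [Matrix.of_apply, Matrix.fromBlocks_apply₂₂, p', Sum.elim_inr, S, q]
        change MvPolynomial.eval _ (MvPolynomial.pderiv z _) = _
        rw [map_sub, MvPolynomial.pderiv_mul, pderiv_rename_zero r _ hz,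
          pderiv_rename_zero r _ hz, MvPolynomial.pderiv_X_self]
        simp [MvPolynomial.eval_rename, hev]
    rw [hM, Matrix.det_fromBlocks_zero₁₂]
    refine mul_ne_zero hdet ?_
    have : S.det = J2 x * D x := by
      rw [Matrix.det_unique]
      exact hBx
    rw [this]
    exact mul_ne_zero h2 hdet
  · intro x hx
    simp [z, Φ', J1, J2]
  · intro a b ha hb ha1 hb1
    have hdA : A.totalDegree ≤ ∑ i : Fin d, (a i.castSucc - 1) + ∑ k, (b k - 1) :=
      bigDet_degree _ _ (fun i => a i.castSucc) b (fun i => ha _) hb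
    have hdB : B.totalDegree ≤ ∑ i : Fin d, (a i.succ - 1) + ∑ k, (b k - 1) :=
      bigDet_degree _ _ (fun i => a i.succ) b (fun i => ha _) hb
    have e1 := Fin.sum_univ_castSucc (fun i => a i - 1)
    have e2 := Fin.sum_univ_succ (fun i => a i - 1)
    have hq : q.totalDegree ≤ 1 + (∑ i, (a i - 1) + ∑ k, (b k - 1)) := by
      refine (MvPolynomial.totalDegree_sub _ _).trans (max_le ?_ ?_)
      · refine (MvPolynomial.totalDegree_mul _ _).trans ?_
        have := MvPolynomial.totalDegree_rename_le r B
        rw [MvPolynomial.totalDegree_X]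
        omega
      · have := MvPolynomial.totalDegree_rename_le r A
        omega
    have hq2 : q.totalDegree ≤ (∏ i, a i) * ∏ k, b k := by
      have := one_add_sum_le Finset.univ (Sum.elim a b) (by rintro (i | k) _ <;> simp [ha1, hb1])
      simp only [Fintype.sum_sum_type, Fintype.prod_sum_type, Sum.elim_inl, Sum.elim_inr] at this
      exact hq.trans this
    rw [MvPolynomial.totalDegree_X, one_mul, Fintype.prod_sum_type]
    simp only [p', Sum.elim_inl, Sum.elim_inr, Finset.univ_unique, Finset.prod_singleton]
    gcongr with k
    exact (MvPolynomial.totalDegree_rename_le _ _).trans (hb k)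

lemma dense_inter {d : ℕ} {n : Type} (s : Finset n) (U : Set (Fin d → ℝ))
    (D : n → (Fin d → ℝ) → ℝ) (hc : ∀ i, ContinuousOn (D i) U)
    (hD : ∀ i, ∀ V : Set (Fin d → ℝ), IsOpen V → V ⊆ U → V.Nonempty → ∃ x ∈ V, D i x ≠ 0) :
    ∀ V : Set (Fin d → ℝ), IsOpen V → V ⊆ U → V.Nonempty → ∃ x ∈ V, ∀ i ∈ s, D i x ≠ 0 := by
  classical
  induction s using Finset.induction_on with
  | empty =>
    rintro V - - ⟨x, hx⟩
    exact ⟨x, hx, by simp⟩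
  | insert a s ha ih =>
    intro V hV hVU hne
    have hW : IsOpen (V ∩ D a ⁻¹' {0}ᶜ) :=
      ((hc a).mono hVU).isOpen_inter_preimage hV isOpen_compl_singleton
    obtain ⟨y, hy, hy2⟩ := hD a V hV hVU hne
    obtain ⟨x, hx, hx2⟩ := ih _ hW (Set.inter_subset_left.trans hVU) ⟨y, hy, hy2⟩
    refine ⟨x, hx.1, ?_⟩
    intro i hi
    rcases Finset.mem_insert.1 hi with rfl | hi
    · exact hx.2
    · exact hx2 i hi

lemma combine {d m : ℕ} {U : Set (Fin d → ℝ)} (M : Fin m → ℕ)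
    (Φ : ∀ i, (Fin d → ℝ) → Fin (M i) → ℝ)
    (p : ∀ i, Fin (M i) → MvPolynomial (Fin d ⊕ Fin (M i)) ℝ)
    (h : ∀ i, IsAlgLift d (M i) U (Φ i) (p i)) :
    GLift d (Σ i, Fin (M i)) U (fun x k => Φ k.1 x k.2)
      (fun k => MvPolynomial.rename (Sum.map id (Sigma.mk k.1)) (p k.1 k.2)) := by
  have hev : ∀ x i, (Sum.elim x (fun k : (Σ i, Fin (M i)) => Φ k.1 x k.2)) ∘
      (Sum.map id (Sigma.mk i)) = Sum.elim x (Φ i x) := by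
    intro x i; ext (a | a) <;> simp
  refine ⟨?_, ?_, ?_⟩
  · exact analyticOnNhd_pi_iff.2 fun k => analyticOnNhd_pi_iff.1 (h k.1).1 k.2
  · intro x hx k
    rw [MvPolynomial.eval_rename, hev]
    exact (h k.1).2.1 x hx k.2
  · intro V hV hVU hne
    let D : Fin m → (Fin d → ℝ) → ℝ := fun i x => Matrix.det (Matrix.of fun j j' : Fin (M i) =>
      MvPolynomial.eval (Sum.elim x (Φ i x)) (MvPolynomial.pderiv (Sum.inr j') (p i j)))
    obtain ⟨x, hx, hx2⟩ := dense_inter Finset.univ U D (fun i x hx =>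
      (analyticAt_det (fun x => Matrix.of fun j j' : Fin (M i) =>
        MvPolynomial.eval (Sum.elim x (Φ i x)) (MvPolynomial.pderiv (Sum.inr j') (p i j))) x
        (fun j j' => analyticAt_eval ((h i).1 x hx) _)).continuousAt.continuousWithinAt)
      (fun i => (h i).2.2) V hV hVU hne
    refine ⟨x, hx, ?_⟩
    rw [ne_eq, ← Matrix.exists_mulVec_eq_zero_iff]
    rintro ⟨v, hv, hv0⟩
    apply hv
    ext ⟨i, j⟩
    have h1 := hx2 i (Finset.mem_univ _)
    by_contra hne
    apply h1
    refine Matrix.exists_mulVec_eq_zero_iff.1 ⟨fun j => v ⟨i, j⟩, fun h0 => hne (congrFun h0 j), ?_⟩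
    ext j
    have h2 := congrFun hv0 ⟨i, j⟩
    simp only [Matrix.mulVec, dotProduct, Matrix.of_apply, Pi.zero_apply,
      Fintype.sum_sigma] at h2 ⊢
    rw [Finset.sum_eq_single i] at h2
    · rw [← h2]
      refine Finset.sum_congr rfl fun j' _ => ?_
      have hinj : Function.Injective (Sum.map id (Sigma.mk (β := fun i => Fin (M i)) i) :
          Fin d ⊕ Fin (M i) → Fin d ⊕ (Σ i, Fin (M i))) :=
        Function.Injective.sumMap (f := id) (g := Sigma.mk (β := fun i => Fin (M i)) i)
          Function.injective_id sigma_mk_injective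
      have : (Sum.inr ⟨i, j'⟩ : Fin d ⊕ (Σ i, Fin (M i))) = Sum.map id (Sigma.mk i) (Sum.inr j') :=
        rfl
      rw [this, MvPolynomial.pderiv_rename hinj, MvPolynomial.eval_rename, hev]
    · intro b _ hb
      refine Finset.sum_eq_zero fun j' _ => ?_
      rw [pderiv_rename_zero]
      · simp
      · rintro (c | c)
        · simp
        · simp only [Sum.map_inr, ne_eq, Sum.inr.injEq, Sigma.mk.injEq, not_and]
          intro hh
          exact absurd hh.symm hb
    · simp

lemma jacDet_zero {d : ℕ} {U : Set (Fin d → ℝ)} (hU : IsOpen U) (g : Fin d → (Fin d → ℝ) → ℝ)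
    (i : Fin d) (c : ℝ) (hc : ∀ x ∈ U, g i x = c) (x : Fin d → ℝ) (hx : x ∈ U) :
    jacDet d g x = 0 := by
  apply Matrix.det_eq_zero_of_row_eq_zero i
  intro j
  have : g i =ᶠ[nhds x] fun _ => c := by
    filter_upwards [hU.mem_nhds hx] with y hy using hc y hy
  simp [this.fderiv_eq]

lemma deg_pos {d M : ℕ} {U : Set (Fin d → ℝ)} (hU : IsOpen U) (hne : U.Nonempty)
    {Φ : (Fin d → ℝ) → Fin M → ℝ} {p : Fin M → MvPolynomial (Fin d ⊕ Fin M) ℝ}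
    (h : IsAlgLift d M U Φ p) (j : Fin M) : 1 ≤ (p j).totalDegree := by
  by_contra hlt
  have h0 : (p j).totalDegree = 0 := by omega
  obtain ⟨x, -, hdet⟩ := h.2.2 U hU subset_rfl hne
  apply hdet
  apply Matrix.det_eq_zero_of_row_eq_zero j
  intro j'
  rw [Matrix.of_apply, MvPolynomial.totalDegree_eq_zero_iff_eq_C.1 h0]
  simp

/-- Either `f` is constant, or there is an optimal representation with positive degree. -/
lemma rep_cases {d : ℕ} {U : Set (Fin d → ℝ)} {f : (Fin d → ℝ) → ℝ} (hf : IsNash d U f) :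
    (∃ c, ∀ x ∈ U, f x = c) ∨ ∃ (M : ℕ) (Φ : (Fin d → ℝ) → Fin M → ℝ)
    (p : Fin M → MvPolynomial (Fin d ⊕ Fin M) ℝ)
    (F : MvPolynomial (Fin d ⊕ Fin M) ℝ), IsNashRep d M U f Φ p F ∧
    complexity d U f = F.totalDegree * ∏ j, (p j).totalDegree ∧ 1 ≤ F.totalDegree := by
  by_cases h0 : ∀ x ∈ U, f x = 0
  · exact Or.inl ⟨0, h0⟩
  have hne : { c : ℕ | ∃ (M : ℕ) (Φ : (Fin d → ℝ) → Fin M → ℝ)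
    (p : Fin M → MvPolynomial (Fin d ⊕ Fin M) ℝ)
    (F : MvPolynomial (Fin d ⊕ Fin M) ℝ), IsNashRep d M U f Φ p F ∧
    c = F.totalDegree * ∏ j, (p j).totalDegree }.Nonempty := by
    obtain ⟨M, Φ, p, F, h⟩ := hf
    exact ⟨_, M, Φ, p, F, h, rfl⟩
  obtain ⟨M, Φ, p, F, h, hc⟩ := Nat.sInf_mem hne
  by_cases hF : F.totalDegree = 0
  · left
    refine ⟨F.coeff 0, fun x hx => ?_⟩
    rw [h.2 x hx]
    conv_lhs => rw [MvPolynomial.totalDegree_eq_zero_iff_eq_C.1 hF]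
    simp
  · right
    refine ⟨M, Φ, p, F, h, ?_, by omega⟩
    rw [complexity, if_neg h0]
    exact hc

theorem statement13 (d : ℕ) (hd : 0 < d) (U : Set (Fin d → ℝ)) (hU : IsOpen U)
    (f : Fin (d + 1) → (Fin d → ℝ) → ℝ) (hf : ∀ i, IsNash d U (f i)) :
    IsNash d
        { x : Fin d → ℝ | x ∈ U ∧ jacDet d (fun i => f i.succ) x ≠ 0 }
        (fun x => jacDet d (fun i => f i.castSucc) x /
          jacDet d (fun i => f i.succ) x) ∧
      complexity d
          { x : Fin d → ℝ | x ∈ U ∧ jacDet d (fun i => f i.succ) x ≠ 0 }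
          (fun x => jacDet d (fun i => f i.castSucc) x /
            jacDet d (fun i => f i.succ) x) ≤
        (∏ i : Fin (d + 1), complexity d U (f i)) ^ 2 := by
  have gen : ∀ (M : Fin (d + 1) → ℕ) (Φ : ∀ i, (Fin d → ℝ) → Fin (M i) → ℝ)
      (p : ∀ i, Fin (M i) → MvPolynomial (Fin d ⊕ Fin (M i)) ℝ)
      (F : ∀ i, MvPolynomial (Fin d ⊕ Fin (M i)) ℝ),
      (∀ i, IsNashRep d (M i) U (f i) (Φ i) (p i) (F i)) → _ := fun M Φ p F h =>
    core hU (combine M Φ p fun i => (h i).1) f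
      (fun i => MvPolynomial.rename (Sum.map id (Sigma.mk i)) (F i)) (by
        intro i x hx
        rw [MvPolynomial.eval_rename, (h i).2 x hx]
        congr 2
        ext (a | a) <;> simp)
  constructor
  · choose M Φ p F h using hf
    obtain ⟨Φ', p', F', h1, h2, -⟩ := gen M Φ p F h
    obtain ⟨N, Ψ, q, G, h3, -⟩ := h1.toFin _ F' h2
    exact ⟨N, Ψ, q, G, h3⟩
  · by_cases hconst : ∃ i c, ∀ x ∈ U, f i x = c
    · obtain ⟨i, c, hc⟩ := hconst
      rw [complexity, if_pos]
      · exact Nat.zero_le _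
      · rintro x ⟨hx, hx2⟩
        rcases Fin.eq_castSucc_or_eq_last i with ⟨k, rfl⟩ | rfl
        · rw [jacDet_zero hU (fun i => f i.castSucc) k c hc x hx, zero_div]
        · exfalso
          apply hx2
          obtain ⟨k, hk⟩ := Fin.exists_succ_eq.2 (show Fin.last d ≠ 0 by
            intro h; have := congrArg Fin.val h; simp at this; omega)
          exact jacDet_zero hU (fun i => f i.succ) k c (by simpa only [hk] using hc) x hx
    · have hne : U.Nonempty := by
        by_contra hemp
        rw [Set.not_nonempty_iff_eq_empty] at hemp
        exact hconst ⟨0, 0, by simp [hemp]⟩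
      have hrep := fun i => (rep_cases (hf i)).resolve_left fun hc => hconst ⟨i, hc⟩
      choose M Φ p F h hcomp hF using hrep
      obtain ⟨Φ', p', F', h1, h2, hdeg⟩ := gen M Φ p F h
      obtain ⟨N, Ψ, q, G, h3, h4⟩ := h1.toFin _ F' h2
      have hb := hdeg (fun i => (F i).totalDegree) (fun k => (p k.1 k.2).totalDegree)
        (fun i => MvPolynomial.totalDegree_rename_le _ _)
        (fun k => MvPolynomial.totalDegree_rename_le _ _) hF
        (fun k => deg_pos hU hne (h k.1).1 k.2)
      rw [complexity]
      split_ifs with h0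
      · exact Nat.zero_le _
      · refine le_trans (Nat.sInf_le ?_) (h4.trans (hb.trans ?_))
        · exact ⟨N, Ψ, q, G, h3, rfl⟩
        simp only [hcomp, Finset.prod_mul_distrib, Fintype.prod_sigma]
        have h5 : 1 ≤ ∏ i, (F i).totalDegree :=
          Nat.succ_le_of_lt (Finset.prod_pos fun i _ => hF i)
        rw [sq]
        gcongr
        exact Nat.le_mul_of_pos_left _ h5

end StatementThirteen
end
end

section
/- Let g₁,…,g_d be Nash functions on an open set U ⊆ ℝ^d and let E ⊆ U be a Borel measurable set such that |g_i(x)| ≤ 1 for every x ∈ E and every i ∈ {1,…,d}. Then ∫_E |det(∂g_i/∂x^j(x))_{i,j=1}^d| dx ≤ 2^d · c(g₁) ⋯ c(g_d). -/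
noncomputable section

open scoped BigOperators

namespace StatementFourteen

/-- `Φ` is an algebraic lifting map on `U` with annihilating polynomial map `p`. -/
def IsAlgLift (d M : ℕ) (U : Set (Fin d → ℝ)) (Φ : (Fin d → ℝ) → Fin M → ℝ)
    (p : Fin M → MvPolynomial (Fin d ⊕ Fin M) ℝ) : Prop :=
  AnalyticOnNhd ℝ Φ U ∧
  (∀ x ∈ U, ∀ j, MvPolynomial.eval (Sum.elim x (Φ x)) (p j) = 0) ∧
  (∀ V : Set (Fin d → ℝ), IsOpen V → V ⊆ U → V.Nonempty →
    ∃ x ∈ V, Matrix.det (Matrix.of fun j j' : Fin M =>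
      MvPolynomial.eval (Sum.elim x (Φ x)) (MvPolynomial.pderiv (Sum.inr j') (p j))) ≠ 0)

/-- `f` lifts to the polynomial `F` via the algebraic lifting map `Φ` with
annihilating map `p`. -/
def IsNashRep (d M : ℕ) (U : Set (Fin d → ℝ)) (f : (Fin d → ℝ) → ℝ)
    (Φ : (Fin d → ℝ) → Fin M → ℝ)
    (p : Fin M → MvPolynomial (Fin d ⊕ Fin M) ℝ)
    (F : MvPolynomial (Fin d ⊕ Fin M) ℝ) : Prop :=
  IsAlgLift d M U Φ p ∧ ∀ x ∈ U, f x = MvPolynomial.eval (Sum.elim x (Φ x)) F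

/-- `f` is a Nash function on `U`. -/
def IsNash (d : ℕ) (U : Set (Fin d → ℝ)) (f : (Fin d → ℝ) → ℝ) : Prop :=
  ∃ (M : ℕ) (Φ : (Fin d → ℝ) → Fin M → ℝ)
    (p : Fin M → MvPolynomial (Fin d ⊕ Fin M) ℝ)
    (F : MvPolynomial (Fin d ⊕ Fin M) ℝ), IsNashRep d M U f Φ p F

open Classical in
/-- The complexity of a Nash function: the minimum of `deg F · deg p¹ ⋯ deg p^M`
over all representations; the zero function has complexity `0`. -/
def complexity (d : ℕ) (U : Set (Fin d → ℝ)) (f : (Fin d → ℝ) → ℝ) : ℕ :=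
  if ∀ x ∈ U, f x = 0 then 0
  else sInf { c : ℕ | ∃ (M : ℕ) (Φ : (Fin d → ℝ) → Fin M → ℝ)
    (p : Fin M → MvPolynomial (Fin d ⊕ Fin M) ℝ)
    (F : MvPolynomial (Fin d ⊕ Fin M) ℝ), IsNashRep d M U f Φ p F ∧
    c = F.totalDegree * ∏ j, (p j).totalDegree }

section Helpers
open MeasureTheory Set Filter Topology


theorem null_aux {d : ℕ} (hd : 0 < d) {U : Set (Fin d → ℝ)} (hU : IsOpen U)
    {s : (Fin d → ℝ) → ℝ} (hs : AnalyticOnNhd ℝ s U) :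
    volume {x | x ∈ U ∧ s x = 0 ∧ fderiv ℝ s x ≠ 0} = 0 := by
  set T := {x | x ∈ U ∧ s x = 0 ∧ fderiv ℝ s x ≠ 0} with hT
  have hTm : MeasurableSet T := by
    have h1 : IsOpen (U ∩ s ⁻¹' {0}ᶜ) := hs.continuousOn.isOpen_inter_preimage hU isOpen_compl_singleton
    have h2 : MeasurableSet {x | fderiv ℝ s x = 0} := measurable_fderiv ℝ s (measurableSet_singleton 0)
    have : T = (U \ (U ∩ s ⁻¹' {0}ᶜ)) \ {x | fderiv ℝ s x = 0} := by
      ext x; simp [hT]; tauto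
    rw [this]
    exact (hU.measurableSet.diff h1.measurableSet).diff h2
  let e : Fin d → ℝ := fun _ => 1
  have he : e ≠ 0 := fun h => by simpa [e] using congrFun h ⟨0, hd⟩
  have happ : ApproximatesLinearOn (fun x => s x • e) (0 : (Fin d → ℝ) →L[ℝ] (Fin d → ℝ)) T 0 := by
    intro x hx y hy
    simp [hx.2.1, hy.2.1]
  have := happ.norm_fderiv_sub_le volume hTm (fun x => (fderiv ℝ s x).smulRight e) (by
    intro x hx
    exact ((hs x hx.1).differentiableAt.hasFDerivAt.smul_const e).hasFDerivWithinAt)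
  rw [ae_restrict_iff' hTm] at this
  rw [← compl_compl T]
  refine mem_ae_iff.mp ?_
  filter_upwards [this] with x hx hxT
  have h := hx hxT
  have h0 : (fderiv ℝ s x).smulRight e = 0 := by
    rw [sub_zero] at h
    exact nnnorm_eq_zero.mp (le_antisymm h zero_le)
  apply hxT.2.2
  ext v
  have h3 := congrArg (fun L => L v) h0
  simpa [he] using h3

theorem null_of_analytic {d : ℕ} (hd : 0 < d) {U : Set (Fin d → ℝ)} (hU : IsOpen U)
    {s : (Fin d → ℝ) → ℝ} (hs : AnalyticOnNhd ℝ s U)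
    (hne : ∀ V : Set (Fin d → ℝ), IsOpen V → V ⊆ U → V.Nonempty → ∃ x ∈ V, s x ≠ 0) :
    volume {x | x ∈ U ∧ s x = 0} = 0 := by
  classical
  have hsub : {x | x ∈ U ∧ s x = 0} ⊆ ⋃ k : ℕ, ⋃ v : Fin k → Fin d,
      {x | x ∈ U ∧ (fun y => iteratedFDeriv ℝ k s y (fun i => Pi.single (v i) 1)) x = 0 ∧
        fderiv ℝ (fun y => iteratedFDeriv ℝ k s y (fun i => Pi.single (v i) 1)) x ≠ 0} := by
    rintro x ⟨hxU, hx0⟩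
    have hex : ∃ k, iteratedFDeriv ℝ k s x ≠ 0 := by
      by_contra! hall
      obtain ⟨p, r, hp⟩ := hs x hxU
      have hz : ∀ y ∈ Metric.eball x r, s y = 0 := by
        intro y hy
        have hy' : y - x ∈ Metric.eball (0 : Fin d → ℝ) r := by
          simpa [edist_eq_enorm_sub] using hy
        have := hp.hasSum_iteratedFDeriv hy'
        simp only [hall, add_sub_cancel] at this
        simpa using this.unique (by simp)
      obtain ⟨y, hy, hy0⟩ := hne (Metric.eball x r ∩ U) (Metric.isOpen_eball.inter hU) inter_subset_right
        ⟨x, Metric.mem_eball_self hp.r_pos, hxU⟩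
      exact hy0 (hz y hy.1)
    have hk := Nat.find_spec hex
    have hmin := fun m => @Nat.find_min _ _ hex m
    set k := Nat.find hex
    obtain _ | k := k
    · exact absurd (by ext v; simpa using hx0) hk
    have hk0 : iteratedFDeriv ℝ k s x = 0 := by simpa using hmin k (Nat.lt_succ_self k)
    have hk1 : fderiv ℝ (iteratedFDeriv ℝ k s) x ≠ 0 := by
      intro h
      apply hk
      ext m
      rw [iteratedFDeriv_succ_apply_left, h]
      rfl
    obtain ⟨w, hw⟩ : ∃ w, fderiv ℝ (iteratedFDeriv ℝ k s) x w ≠ 0 := by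
      by_contra! h
      exact hk1 (by ext1 w; exact h w)
    obtain ⟨v, hv⟩ : ∃ v : Fin k → Fin d, fderiv ℝ (iteratedFDeriv ℝ k s) x w (fun i => Pi.single (v i) 1) ≠ 0 := by
      by_contra! h
      apply hw
      apply ContinuousMultilinearMap.toMultilinearMap_injective
      refine Module.Basis.ext_multilinear (fun _ => Pi.basisFun ℝ (Fin d)) ?_
      intro v
      simpa using h v
    refine mem_iUnion.2 ⟨k, mem_iUnion.2 ⟨v, hxU, by simp [hk0], ?_⟩⟩
    have hd1 := ((hs.iteratedFDeriv k) x hxU).differentiableAt.hasFDerivAt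
    have hd2 := (ContinuousMultilinearMap.apply ℝ (fun _ : Fin k => (Fin d → ℝ)) ℝ
      (fun i => Pi.single (v i) 1)).hasFDerivAt.comp x hd1
    have hd3 : fderiv ℝ (fun y => iteratedFDeriv ℝ k s y (fun i => Pi.single (v i) 1)) x = _ := hd2.fderiv
    rw [hd3]
    intro h
    exact hv (congrArg (fun L => L w) h)
  refine measure_mono_null hsub (measure_iUnion_null fun k => measure_iUnion_null fun v => ?_)
  apply null_aux hd hU
  intro x hx
  exact ((ContinuousMultilinearMap.apply ℝ (fun _ : Fin k => (Fin d → ℝ)) ℝ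
      (fun i => Pi.single (v i) 1)).analyticAt _).comp ((hs.iteratedFDeriv k) x hx)

/-- Algebraic part: for all but finitely many ε, distinct zeros of the perturbed system are at
most `∏ δ i` many. -/
theorem bezout_alg {σ : Type*} [Fintype σ] (f : σ → MvPolynomial σ ℝ) (δ : σ → ℕ)
    (hδ : ∀ i, (f i).totalDegree ≤ δ i) (N : ℕ) :
    ∃ B : Set ℝ, B.Finite ∧ ∀ ε : ℝ, ε ∉ B → ε ≠ 0 → ∀ z : Fin N → σ → ℝ, Function.Injective z →
      (∀ k i, MvPolynomial.eval (z k) (f i) + ε * (z k i) ^ δ i = 0) → N ≤ ∏ i, δ i := by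
  classical
  let P := MvPolynomial.restrictTotalDegree σ ℝ N
  let b : Module.Basis {a : σ →₀ ℕ | (a.sum fun _ e => e) ≤ N} ℝ P :=
    MvPolynomial.basisRestrictSupport ℝ _
  have hb : ∀ a, ((b a : P) : MvPolynomial σ ℝ) = MvPolynomial.monomial a.1 1 := by
    intro a
    have h0 : b.repr.symm (Finsupp.single a 1) = ⟨MvPolynomial.monomial a.1 1, by
        rw [MvPolynomial.mem_restrictTotalDegree]
        exact (MvPolynomial.totalDegree_monomial_le _ _).trans a.2⟩ := by
      rw [LinearEquiv.symm_apply_eq]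
      ext c
      change _ = MvPolynomial.coeff c.1 (MvPolynomial.monomial a.1 (1:ℝ))
      simp [MvPolynomial.coeff_monomial, Finsupp.single_apply, Subtype.ext_iff]
    exact congrArg Subtype.val h0
  -- the reduction map
  let X0 : {a : σ →₀ ℕ | (a.sum fun _ e => e) ≤ N} → MvPolynomial σ ℝ := fun a =>
    if h : ∃ i, δ i ≤ a.1 i then
      MvPolynomial.monomial (a.1 - Finsupp.single h.choose (δ h.choose)) 1 * f h.choose else 0
  have hX0 : ∀ a, X0 a ∈ P := by
    intro a
    rw [MvPolynomial.mem_restrictTotalDegree]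
    by_cases h : ∃ i, δ i ≤ a.1 i
    · simp only [X0, dif_pos h]
      have hi := h.choose_spec
      set i := h.choose
      refine (MvPolynomial.totalDegree_mul _ _).trans ?_
      have h1 := MvPolynomial.totalDegree_monomial_le (R := ℝ) (a.1 - Finsupp.single i (δ i)) 1
      have h2 : (a.1 - Finsupp.single i (δ i)).degree + δ i = a.1.degree := by
        have : a.1 - Finsupp.single i (δ i) + Finsupp.single i (δ i) = a.1 :=
          tsub_add_cancel_of_le (Finsupp.single_le_iff.2 hi)
        conv_rhs => rw [← this]
        simp
      have h3 : a.1.degree ≤ N := a.2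
      have h4 : (MvPolynomial.monomial (a.1 - Finsupp.single i (δ i)) (1:ℝ)).totalDegree ≤ (a.1 - Finsupp.single i (δ i)).degree := h1
      have := hδ i
      omega
    · simp [X0, dif_neg h]
  let X : Module.End ℝ P := b.constr ℝ (fun a => ⟨X0 a, hX0 a⟩)
  refine ⟨(fun x => -x) '' spectrum ℝ X, (Module.End.finite_spectrum X).image _, ?_⟩
  intro ε hε hε0 z hz hzero
  have hunit : IsUnit (algebraMap ℝ (Module.End ℝ P) (-ε) - X) := by
    by_contra h
    exact hε ⟨-ε, h, by simp⟩
  have hsurj : Function.Surjective (algebraMap ℝ (Module.End ℝ P) (-ε) - X) :=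
    ((Module.End.isUnit_iff _).1 hunit).2
  let ev : MvPolynomial σ ℝ →ₗ[ℝ] (Fin N → ℝ) := LinearMap.pi fun k => (MvPolynomial.aeval (z k)).toLinearMap
  have hev : ∀ p k, ev p k = MvPolynomial.eval (z k) p := by
    intro p k
    simp [ev]
  let box : Finset (σ → ℕ) := Fintype.piFinset fun i => Finset.range (δ i)
  let V : Submodule ℝ (Fin N → ℝ) := Submodule.span ℝ
    (box.image (fun a => fun k => ∏ i, z k i ^ a i) : Finset (Fin N → ℝ))
  have hmon : ∀ a, ev ((algebraMap ℝ (Module.End ℝ P) (-ε) - X) (b a) : P) ∈ V := by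
    intro a
    have h1 : (((algebraMap ℝ (Module.End ℝ P) (-ε) - X) (b a) : P) : MvPolynomial σ ℝ)
        = (-ε) • MvPolynomial.monomial a.1 1 - X0 a := by
      simp [LinearMap.sub_apply, Module.algebraMap_end_apply, X, hb]
    rw [h1]
    by_cases h : ∃ i, δ i ≤ a.1 i
    · convert V.zero_mem
      ext k
      rw [hev]
      simp only [X0, dif_pos h]
      have hi := h.choose_spec
      set i := h.choose
      have h5 : a.1 - Finsupp.single i (δ i) + Finsupp.single i (δ i) = a.1 :=
          tsub_add_cancel_of_le (Finsupp.single_le_iff.2 hi)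
      have h6 : MvPolynomial.monomial a.1 (1:ℝ) = MvPolynomial.monomial (a.1 - Finsupp.single i (δ i)) 1 * MvPolynomial.X i ^ δ i := by
        rw [MvPolynomial.X_pow_eq_monomial, MvPolynomial.monomial_mul, h5, one_mul]
      rw [h6]
      simp only [map_sub, MvPolynomial.smul_eval, map_mul, map_pow, MvPolynomial.eval_X, Pi.zero_apply]
      linear_combination (-(MvPolynomial.eval (z k)) ((MvPolynomial.monomial (a.1 - Finsupp.single i (δ i))) 1)) * hzero k i
    · simp only [X0, dif_neg h, sub_zero, map_smul]
      apply V.smul_mem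
      push Not at h
      apply Submodule.subset_span
      rw [Finset.coe_image]
      refine ⟨a.1, by simpa [box] using h, ?_⟩
      ext k
      rw [hev, MvPolynomial.eval_monomial]
      simp [Finsupp.prod_fintype]
  have hall : ∀ q : P, ev q ∈ V := by
    intro q
    obtain ⟨r, rfl⟩ := hsurj q
    have hle : ∀ r : P, (ev ∘ₗ P.subtype ∘ₗ (algebraMap ℝ (Module.End ℝ P) (-ε) - X)) r ∈ V := by
      intro r
      have hr : Submodule.span ℝ (Set.range b) ≤
          V.comap (ev ∘ₗ P.subtype ∘ₗ (algebraMap ℝ (Module.End ℝ P) (-ε) - X)) := by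
        rw [Submodule.span_le]
        rintro _ ⟨a, rfl⟩
        exact hmon a
      exact hr (b.mem_span r)
    exact hle r
  have hVtop : V = ⊤ := by
    rw [eq_top_iff, ← (Pi.basisFun ℝ (Fin N)).span_eq, Submodule.span_le]
    rintro _ ⟨k, rfl⟩
    -- Lagrange interpolation
    have hsep : ∀ l, ∃ p : MvPolynomial σ ℝ, p.totalDegree ≤ 1 ∧
        MvPolynomial.eval (z l) p = 0 ∧ (l ≠ k → MvPolynomial.eval (z k) p ≠ 0) := by
      intro l
      by_cases hl : l = k
      · exact ⟨0, by simp [hl]⟩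
      · obtain ⟨i, hi⟩ := Function.ne_iff.1 (fun h => hl (hz h))
        refine ⟨MvPolynomial.X i - MvPolynomial.C (z l i), ?_, by simp, fun _ => ?_⟩
        · refine (MvPolynomial.totalDegree_sub_C_le _ _).trans ?_
          simp
        · simpa [sub_eq_zero] using hi.symm
    choose c hc1 hc2 hc3 using hsep
    let q : MvPolynomial σ ℝ := ∏ l ∈ Finset.univ.erase k, c l
    have hqdeg : q ∈ P := by
      rw [MvPolynomial.mem_restrictTotalDegree]
      refine (MvPolynomial.totalDegree_finsetProd _ _).trans ?_
      refine (Finset.sum_le_card_nsmul _ _ 1 ?_).trans ?_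
      · intro l _
        exact hc1 l
      · simp
    have hq : ev q = (ev q k) • (Pi.basisFun ℝ (Fin N) k) := by
      ext m
      rw [hev, hev]
      by_cases hm : m = k
      · subst hm; simp
      · have : MvPolynomial.eval (z m) q = 0 := by
          simp only [q, map_prod]
          exact Finset.prod_eq_zero (Finset.mem_erase.2 ⟨hm, Finset.mem_univ m⟩) (hc2 m)
        rw [this]
        simp [hm]
    have hqk : ev q k ≠ 0 := by
      rw [hev]
      simp only [q, map_prod]
      refine Finset.prod_ne_zero_iff.2 fun l hl => ?_
      exact hc3 l (Finset.ne_of_mem_erase hl)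
    have h7 := hall ⟨q, hqdeg⟩
    rw [hq] at h7
    exact (V.smul_mem_iff hqk).1 h7
  have h8 : Module.finrank ℝ V ≤ _ := finrank_span_finset_le_card _
  rw [hVtop, finrank_top] at h8
  calc N = Module.finrank ℝ (Fin N → ℝ) := by simp
    _ ≤ _ := h8
    _ ≤ box.card := Finset.card_image_le
    _ = _ := by simp [box]

theorem nondeg_persist {n : Type*} [Fintype n] {F H : (n → ℝ) → (n → ℝ)} {z : n → ℝ}
    (hF : AnalyticAt ℝ F z) (hH : AnalyticAt ℝ H z) (hz : F z = 0)
    (hinj : ∀ w, fderiv ℝ F z w = 0 → w = 0) {W : Set (n → ℝ)} (hW : W ∈ 𝓝 z) :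
    ∀ᶠ ε : ℝ in 𝓝 0, ∃ y ∈ W, F y + ε • H y = 0 := by
  let G : ℝ × (n → ℝ) → ℝ × (n → ℝ) := fun q => (q.1, F q.2 + q.1 • H q.2)
  have h1 : HasStrictFDerivAt (fun q : ℝ × (n → ℝ) => F q.2) _ ((0 : ℝ), z) :=
    hF.hasStrictFDerivAt.comp ((0 : ℝ), z) hasStrictFDerivAt_snd
  have h2 : HasStrictFDerivAt (fun q : ℝ × (n → ℝ) => H q.2) _ ((0 : ℝ), z) :=
    hH.hasStrictFDerivAt.comp ((0 : ℝ), z) hasStrictFDerivAt_snd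
  have h3 : HasStrictFDerivAt (fun q : ℝ × (n → ℝ) => q.1) _ ((0 : ℝ), z) :=
    hasStrictFDerivAt_fst (𝕜 := ℝ)
  have hG : HasStrictFDerivAt G _ ((0 : ℝ), z) := h3.prodMk (h1.add (h3.smul h2))
  have hsurj : Function.Surjective (fderiv ℝ F z) := by
    have : Function.Injective (fderiv ℝ F z : (n → ℝ) →ₗ[ℝ] (n → ℝ)) := by
      rw [injective_iff_map_eq_zero]
      exact hinj
    exact LinearMap.injective_iff_surjective.1 this
  have hmap := hG.map_nhds_eq_of_surj (by
    rw [LinearMap.range_eq_top]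
    rintro ⟨a, w⟩
    obtain ⟨u, hu⟩ := hsurj (w - a • H z)
    refine ⟨(a, u), ?_⟩
    simp [hu])
  have hW' : Prod.snd ⁻¹' W ∈ 𝓝 ((0 : ℝ), z) := continuousAt_snd hW
  have him : G '' (Prod.snd ⁻¹' W) ∈ 𝓝 (G (0, z)) := by
    rw [← hmap]; exact image_mem_map hW'
  have hG0 : G (0, z) = ((0 : ℝ), (0 : n → ℝ)) := by simp [G, hz]
  rw [hG0] at him
  have hc : ContinuousAt (fun ε : ℝ => (ε, (0 : n → ℝ))) 0 := by fun_prop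
  filter_upwards [hc him] with ε hε
  obtain ⟨⟨a, y⟩, hy, hGy⟩ := hε
  simp only [G, Prod.mk.injEq] at hGy
  exact ⟨y, hy, by rw [← hGy.1]; exact hGy.2⟩

/-- Bezout bound for nondegenerate real zeros. -/
theorem bezout {σ : Type*} [Fintype σ] (f : σ → MvPolynomial σ ℝ) (δ : σ → ℕ)
    (hδ : ∀ i, (f i).totalDegree ≤ δ i) (N : ℕ) (z : Fin N → σ → ℝ) (hz : Function.Injective z)
    (h0 : ∀ k i, MvPolynomial.eval (z k) (f i) = 0)
    (hnd : ∀ k w, (∀ i, fderiv ℝ (fun y => MvPolynomial.eval y (f i)) (z k) w = 0) → w = 0) :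
    N ≤ ∏ i, δ i := by
  classical
  obtain ⟨B, hB, hmain⟩ := bezout_alg f δ hδ N
  obtain ⟨V, hV, hdis⟩ := (Set.finite_range z).t2_separation
  have han : ∀ i y, AnalyticAt ℝ (fun y => MvPolynomial.eval y (f i)) y := fun i y =>
    AnalyticOnNhd.eval_mvPolynomial (f i) y (mem_univ _)
  have hev : ∀ k, ∀ᶠ ε : ℝ in 𝓝 0, ∃ y ∈ V (z k),
      (fun i => MvPolynomial.eval y (f i)) + ε • (fun i => y i ^ δ i) = 0 := by
    intro k
    refine nondeg_persist (F := fun y i => MvPolynomial.eval y (f i)) (H := fun y i => y i ^ δ i)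
      (AnalyticAt.pi fun i => han i _) ?_ (by ext i; exact h0 k i) ?_
      ((hV (z k)).2.mem_nhds (hV (z k)).1)
    · refine AnalyticAt.pi fun i => ?_
      exact ((ContinuousLinearMap.proj (R := ℝ) (φ := fun _ : σ => ℝ) i).analyticAt _).pow _
    · intro w hw
      refine hnd k w fun i => ?_
      rw [fderiv_pi (fun i => (han i _).differentiableAt)] at hw
      exact congrFun hw i
  have hall : ∀ᶠ ε : ℝ in 𝓝[≠] 0, (∀ k, ∃ y ∈ V (z k),
      (fun i => MvPolynomial.eval y (f i)) + ε • (fun i => y i ^ δ i) = 0) ∧ ε ∉ B ∧ ε ≠ 0 := by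
    have hB' : ∀ᶠ ε : ℝ in 𝓝[≠] 0, ε ∉ B := by
      have h : (B \ {0})ᶜ ∈ 𝓝 (0 : ℝ) :=
        (hB.subset Set.sdiff_subset).isClosed.isOpen_compl.mem_nhds (by simp)
      filter_upwards [mem_nhdsWithin_of_mem_nhds h, self_mem_nhdsWithin] with ε h1 h2 h3
      exact h1 ⟨h3, h2⟩
    filter_upwards [(eventually_all.2 hev).filter_mono nhdsWithin_le_nhds, hB',
      self_mem_nhdsWithin] with ε h1 h2 h3
    exact ⟨h1, h2, h3⟩
  obtain ⟨ε, h1, h2, h3⟩ := hall.exists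
  choose y hyV hy using h1
  refine hmain ε h2 h3 y ?_ ?_
  · intro k l hkl
    by_contra hne
    have := hdis ⟨k, rfl⟩ ⟨l, rfl⟩ (fun h => hne (hz h))
    exact Set.disjoint_left.1 this (hyV k) (hkl ▸ hyV l)
  · intro k i
    simpa using congrFun (hy k) i

theorem area_bound {d : ℕ} (G : (Fin d → ℝ) → (Fin d → ℝ)) (A : Set (Fin d → ℝ))
    (hA : MeasurableSet A) (hG : ∀ x ∈ A, HasStrictFDerivAt G (fderiv ℝ G x) x)
    (hdet : ∀ x ∈ A, (fderiv ℝ G x).det ≠ 0) (K : Set (Fin d → ℝ)) (hK : MeasurableSet K)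
    (hAK : MapsTo G A K) (N : ℕ)
    (hN : ∀ t, ∀ s : Finset (Fin d → ℝ), (∀ x ∈ s, x ∈ A ∧ G x = t) → s.card ≤ N) :
    ∫⁻ x in A, ENNReal.ofReal |(fderiv ℝ G x).det| ≤ N * volume K := by
  classical
  rcases A.eq_empty_or_nonempty with rfl | hne
  · simp
  have hloc : ∀ x, ∃ u : Set (Fin d → ℝ), x ∈ A → (IsOpen u ∧ x ∈ u ∧ InjOn G u) := by
    intro x
    by_cases hx : x ∈ A
    · have hs := hG x hx
      let e := (fderiv ℝ G x).toContinuousLinearEquivOfDetNeZero (hdet x hx)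
      have hs' : HasStrictFDerivAt G (e : (Fin d → ℝ) →L[ℝ] (Fin d → ℝ)) x := by
        simpa [e] using hs
      let φ := hs'.toOpenPartialHomeomorph
      exact ⟨φ.source, fun _ => ⟨φ.open_source, hs'.mem_toOpenPartialHomeomorph_source, φ.injOn⟩⟩
    · exact ⟨∅, fun h => absurd h hx⟩
  choose u hu using hloc
  obtain ⟨T, hTA, hTc, hcov⟩ := TopologicalSpace.countable_cover_nhdsWithin (f := u) (s := A)
    (fun x hx => mem_nhdsWithin_of_mem_nhds ((hu x hx).1.mem_nhds (hu x hx).2.1))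
  have hTne : T.Nonempty := by
    obtain ⟨x, hx⟩ := hne
    obtain ⟨y, hy, _⟩ := mem_iUnion₂.1 (hcov hx)
    exact ⟨y, hy⟩
  obtain ⟨c, rfl⟩ := hTc.exists_eq_range hTne
  have hcA : ∀ n, c n ∈ A := fun n => hTA ⟨n, rfl⟩
  let S : ℕ → Set (Fin d → ℝ) := fun n => A ∩ disjointed (fun n => u (c n)) n
  have hSm : ∀ n, MeasurableSet (S n) := fun n =>
    hA.inter (MeasurableSet.disjointed (fun n => (hu _ (hcA n)).1.measurableSet) n)
  have hSdis : Pairwise (Function.onFun Disjoint S) := fun i j hij =>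
    (disjoint_disjointed (fun n => u (c n)) hij).mono inter_subset_right inter_subset_right
  have hSun : ⋃ n, S n = A := by
    rw [← inter_iUnion, iUnion_disjointed]
    refine inter_eq_left.2 (hcov.trans ?_)
    simp
  have hSinj : ∀ n, InjOn G (S n) := fun n => (hu _ (hcA n)).2.2.mono
    (inter_subset_right.trans (disjointed_subset _ n))
  have hfd : ∀ n, ∀ x ∈ S n, HasFDerivWithinAt G (fderiv ℝ G x) (S n) x := fun n x hx =>
    (hG x hx.1).hasFDerivAt.hasFDerivWithinAt
  have him : ∀ n, MeasurableSet (G '' S n) := fun n =>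
    measurable_image_of_fderivWithin (hSm n) (hfd n) (hSinj n)
  calc ∫⁻ x in A, ENNReal.ofReal |(fderiv ℝ G x).det|
      = ∑' n, ∫⁻ x in S n, ENNReal.ofReal |(fderiv ℝ G x).det| := by
        rw [← lintegral_iUnion hSm hSdis, hSun]
    _ = ∑' n, ∫⁻ t, (G '' S n).indicator 1 t := by
        congr 1; ext n
        rw [lintegral_abs_det_fderiv_eq_addHaar_image volume (hSm n) (hfd n) (hSinj n),
          lintegral_indicator_one (him n)]
    _ = ∫⁻ t, ∑' n, (G '' S n).indicator 1 t := by
        rw [lintegral_tsum]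
        intro n
        exact (measurable_one.indicator (him n)).aemeasurable
    _ ≤ ∫⁻ t, K.indicator (fun _ => (N : ENNReal)) t := by
        refine lintegral_mono fun t => ?_
        by_cases ht : t ∈ K
        · rw [indicator_of_mem ht]
          rw [ENNReal.tsum_eq_iSup_sum]
          refine iSup_le fun s => ?_
          have h1 : ∑ n ∈ s, (G '' S n).indicator (1 : (Fin d → ℝ) → ENNReal) t
              = ((s.filter fun n => t ∈ G '' S n).card : ENNReal) := by
            rw [Finset.card_filter]
            push_cast
            refine Finset.sum_congr rfl fun n _ => ?_
            simp [indicator_apply]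
          rw [h1]
          have h2 : ∀ n, ∃ x, t ∈ G '' S n → (x ∈ S n ∧ G x = t) := by
            intro n
            by_cases h : t ∈ G '' S n
            · obtain ⟨x, hx⟩ := h
              exact ⟨x, fun _ => hx⟩
            · exact ⟨0, fun h' => absurd h' h⟩
          choose z hz using h2
          have h3 : ((s.filter fun n => t ∈ G '' S n).image z).card ≤ N := by
            apply hN t
            intro x hx
            obtain ⟨n, hn, rfl⟩ := Finset.mem_image.1 hx
            have := hz n (Finset.mem_filter.1 hn).2
            exact ⟨this.1.1, this.2⟩
          rw [Finset.card_image_of_injOn] at h3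
          · exact_mod_cast h3
          · intro n hn m hm hnm
            by_contra hne'
            have hn' := (hz n (Finset.mem_filter.1 hn).2).1
            have hm' := (hz m (Finset.mem_filter.1 hm).2).1
            exact Set.disjoint_left.1 (hSdis hne') hn' (hnm ▸ hm')
        · have : ∀ n, (G '' S n).indicator (1 : (Fin d → ℝ) → ENNReal) t = 0 := by
            intro n
            refine indicator_of_notMem ?_ _
            rintro ⟨x, hx, rfl⟩
            exact ht (hAK hx.1)
          simp [this]
    _ = N * volume K := by
        rw [lintegral_indicator hK, lintegral_const]
        simp

theorem fderiv_mvPoly {σ : Type*} [Fintype σ] (q : MvPolynomial σ ℝ) (y w : σ → ℝ) :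
    fderiv ℝ (fun y => MvPolynomial.eval y q) y w =
      ∑ s, MvPolynomial.eval y (MvPolynomial.pderiv s q) * w s := by
  classical
  have hdiff : ∀ q : MvPolynomial σ ℝ, DifferentiableAt ℝ (fun y => MvPolynomial.eval y q) y :=
    fun q => (AnalyticOnNhd.eval_mvPolynomial q y (mem_univ _)).differentiableAt
  induction q using MvPolynomial.induction_on with
  | C a => simp
  | add p q hp hq =>
    simp only [map_add]
    rw [fderiv_fun_add (hdiff p) (hdiff q)]
    simp only [_root_.add_apply, hp, hq, add_mul, Finset.sum_add_distrib]
  | mul_X p i hp =>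
    simp only [map_mul, MvPolynomial.eval_X]
    have hX : HasFDerivAt (fun y : σ → ℝ => y i)
        (ContinuousLinearMap.proj (R := ℝ) (φ := fun _ : σ => ℝ) i) y :=
      (ContinuousLinearMap.proj (R := ℝ) (φ := fun _ : σ => ℝ) i).hasFDerivAt
    have h := ((hdiff p).hasFDerivAt.mul hX).fderiv
    change fderiv ℝ (fun y => MvPolynomial.eval y p * y i) y = _ at h
    rw [h]
    simp only [_root_.add_apply, _root_.smul_apply, hp, smul_eq_mul,
      ContinuousLinearMap.proj_apply, Derivation.leibniz, MvPolynomial.pderiv_X, map_add, map_mul,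
      MvPolynomial.eval_X, add_mul, Finset.sum_add_distrib, Finset.mul_sum]
    congr 1
    · rw [Finset.sum_eq_single i]
      · simp
      · intro b _ hb
        simp [Pi.single_apply, hb.symm]
      · simp
    · refine Finset.sum_congr rfl fun s _ => ?_
      ring

/-- The lifted point. -/
theorem nash_point {d M : ℕ} {U : Set (Fin d → ℝ)} {Φ : (Fin d → ℝ) → Fin M → ℝ}
    (hΦ : AnalyticOnNhd ℝ Φ U) :
    AnalyticOnNhd ℝ (fun x => (Sum.elim x (Φ x) : Fin d ⊕ Fin M → ℝ)) U ∧
    ∀ x ∈ U, HasFDerivAt (fun x => (Sum.elim x (Φ x) : Fin d ⊕ Fin M → ℝ))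
      (fderiv ℝ (fun x => (Sum.elim x (Φ x) : Fin d ⊕ Fin M → ℝ)) x) x ∧
      ∀ u, fderiv ℝ (fun x => (Sum.elim x (Φ x) : Fin d ⊕ Fin M → ℝ)) x u
        = Sum.elim u (fderiv ℝ Φ x u) := by
  have han : AnalyticOnNhd ℝ (fun x => (Sum.elim x (Φ x) : Fin d ⊕ Fin M → ℝ)) U := by
    intro x hx
    refine AnalyticAt.pi ?_
    rintro (i | j)
    · exact (ContinuousLinearMap.proj (R := ℝ) (φ := fun _ : Fin d => ℝ) i).analyticAt _
    · exact ((ContinuousLinearMap.proj (R := ℝ) (φ := fun _ : Fin M => ℝ) j).analyticAt _).comp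
        (hΦ x hx)
  refine ⟨han, fun x hx => ⟨(han x hx).differentiableAt.hasFDerivAt, fun u => ?_⟩⟩
  have hd := (han x hx).differentiableAt
  ext s
  have h1 : fderiv ℝ (fun x => (Sum.elim x (Φ x) : Fin d ⊕ Fin M → ℝ)) x u s
      = fderiv ℝ (fun x => (Sum.elim x (Φ x) : Fin d ⊕ Fin M → ℝ) s) x u := by
    rw [fderiv_apply hd]
    rfl
  rw [h1]
  rcases s with i | j
  · simp only [Sum.elim_inl]
    have : HasFDerivAt (fun x : Fin d → ℝ => x i)
        (ContinuousLinearMap.proj (R := ℝ) (φ := fun _ : Fin d => ℝ) i) x :=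
      (ContinuousLinearMap.proj (R := ℝ) (φ := fun _ : Fin d => ℝ) i).hasFDerivAt
    rw [this.fderiv]
    rfl
  · simp only [Sum.elim_inr]
    rw [fderiv_apply (hΦ x hx).differentiableAt]
    rfl

theorem mvPoly_diff {σ : Type*} [Fintype σ] (q : MvPolynomial σ ℝ) (y : σ → ℝ) :
    DifferentiableAt ℝ (fun y => MvPolynomial.eval y q) y :=
  (AnalyticOnNhd.eval_mvPolynomial q y (mem_univ _)).differentiableAt

/-- chain rule for a polynomial along the lift -/
theorem nash_chain {d M : ℕ} {U : Set (Fin d → ℝ)} (hU : IsOpen U) {Φ : (Fin d → ℝ) → Fin M → ℝ}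
    (hΦ : AnalyticOnNhd ℝ Φ U) (q : MvPolynomial (Fin d ⊕ Fin M) ℝ) {f : (Fin d → ℝ) → ℝ}
    (hf : ∀ x ∈ U, f x = MvPolynomial.eval (Sum.elim x (Φ x)) q) {x : Fin d → ℝ} (hx : x ∈ U)
    (u : Fin d → ℝ) :
    fderiv ℝ f x u = fderiv ℝ (fun y => MvPolynomial.eval y q) (Sum.elim x (Φ x))
      (Sum.elim u (fderiv ℝ Φ x u)) := by
  obtain ⟨_, h⟩ := nash_point hΦ
  obtain ⟨h1, h2⟩ := h x hx
  have h3 : f =ᶠ[𝓝 x] fun x => MvPolynomial.eval (Sum.elim x (Φ x)) q := by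
    filter_upwards [hU.mem_nhds hx] with y hy using hf y hy
  have h4 := (mvPoly_diff q (Sum.elim x (Φ x))).hasFDerivAt.comp x h1
  have h5 : fderiv ℝ (fun x => MvPolynomial.eval (Sum.elim x (Φ x)) q) x = _ := h4.fderiv
  rw [h3.fderiv_eq, h5, ← h2 u]
  rfl

theorem nash_analytic {d M : ℕ} {U : Set (Fin d → ℝ)} (hU : IsOpen U)
    {Φ : (Fin d → ℝ) → Fin M → ℝ}
    (hΦ : AnalyticOnNhd ℝ Φ U) (q : MvPolynomial (Fin d ⊕ Fin M) ℝ) {f : (Fin d → ℝ) → ℝ}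
    (hf : ∀ x ∈ U, f x = MvPolynomial.eval (Sum.elim x (Φ x)) q) : AnalyticOnNhd ℝ f U := by
  have h : AnalyticOnNhd ℝ (fun x => MvPolynomial.eval (Sum.elim x (Φ x)) q) U := fun x hx =>
    AnalyticAt.comp (g := fun y => MvPolynomial.eval y q)
      (f := fun x => (Sum.elim x (Φ x) : Fin d ⊕ Fin M → ℝ))
      (AnalyticOnNhd.eval_mvPolynomial q (Sum.elim x (Φ x)) (mem_univ _))
      ((nash_point hΦ).1 x hx)
  exact h.congr hU (fun x hx => (hf x hx).symm)

theorem fderiv_rename {σ τ : Type*} [Fintype σ] [Fintype τ] (e : σ → τ) (q : MvPolynomial σ ℝ)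
    (c : ℝ) (y w : τ → ℝ) :
    fderiv ℝ (fun y => MvPolynomial.eval y (MvPolynomial.rename e q - MvPolynomial.C c)) y w =
      fderiv ℝ (fun y => MvPolynomial.eval y q) (y ∘ e) (w ∘ e) := by
  simp only [map_sub, MvPolynomial.eval_C, MvPolynomial.eval_rename]
  rw [fderiv_sub_const]
  let L : (τ → ℝ) →L[ℝ] (σ → ℝ) := ContinuousLinearMap.pi fun s =>
    ContinuousLinearMap.proj (R := ℝ) (φ := fun _ : τ => ℝ) (e s)
  have h := (mvPoly_diff q (L y)).hasFDerivAt.comp y L.hasFDerivAt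
  have h5 : fderiv ℝ (fun y => MvPolynomial.eval (y ∘ e) q) y = _ := h.fderiv
  rw [h5]
  rfl

/-- The fibre bound. -/
theorem fibre_bound {d : ℕ} {U : Set (Fin d → ℝ)} (hU : IsOpen U)
    (g : Fin d → (Fin d → ℝ) → ℝ) (M : Fin d → ℕ) (Φ : ∀ i, (Fin d → ℝ) → Fin (M i) → ℝ)
    (p : ∀ i, Fin (M i) → MvPolynomial (Fin d ⊕ Fin (M i)) ℝ)
    (F : ∀ i, MvPolynomial (Fin d ⊕ Fin (M i)) ℝ)
    (hrep : ∀ i, IsNashRep d (M i) U (g i) (Φ i) (p i) (F i))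
    (t : Fin d → ℝ) (s : Finset (Fin d → ℝ))
    (hs : ∀ x ∈ s, x ∈ U ∧ (∀ i, g i x = t i) ∧
      (∀ u, (∀ i, fderiv ℝ (g i) x u = 0) → u = 0) ∧
      ∀ i, Matrix.det (Matrix.of fun j j' : Fin (M i) =>
        MvPolynomial.eval (Sum.elim x (Φ i x)) (MvPolynomial.pderiv (Sum.inr j') (p i j))) ≠ 0) :
    s.card ≤ ∏ i, ((F i).totalDegree * ∏ j, (p i j).totalDegree) := by
  classical
  let σ := Fin d ⊕ (Σ i, Fin (M i))
  let e : ∀ i, Fin d ⊕ Fin (M i) → σ := fun i => Sum.map id (fun j => ⟨i, j⟩)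
  let f : σ → MvPolynomial σ ℝ := Sum.elim
    (fun i => MvPolynomial.rename (e i) (F i) - MvPolynomial.C (t i))
    (fun ij => MvPolynomial.rename (e ij.1) (p ij.1 ij.2) - MvPolynomial.C 0)
  let δ : σ → ℕ := Sum.elim (fun i => (F i).totalDegree) (fun ij => (p ij.1 ij.2).totalDegree)
  have hδ : ∀ a, (f a).totalDegree ≤ δ a := by
    rintro (i | ij)
    · exact (MvPolynomial.totalDegree_sub_C_le _ _).trans (MvPolynomial.totalDegree_rename_le _ _)
    · exact (MvPolynomial.totalDegree_sub_C_le _ _).trans (MvPolynomial.totalDegree_rename_le _ _)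
  let ζ : (Fin d → ℝ) → σ → ℝ := fun x => Sum.elim x (fun ij => Φ ij.1 x ij.2)
  have hζe : ∀ x i, ζ x ∘ e i = Sum.elim x (Φ i x) := by
    intro x i
    ext (a | b) <;> rfl
  let z : Fin s.card → σ → ℝ := fun k => ζ (s.equivFin.symm k)
  have hbez := bezout f δ hδ s.card z ?_ ?_ ?_
  · refine hbez.trans (le_of_eq ?_)
    simp only [σ, δ, Fintype.prod_sum_type, Sum.elim_inl, Sum.elim_inr, Fintype.prod_sigma,
      Finset.prod_mul_distrib]
  · intro k l hkl
    apply s.equivFin.symm.injective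
    apply Subtype.ext
    ext i
    exact congrFun hkl (Sum.inl i)
  · intro k
    have hx := hs _ (s.equivFin.symm k).2
    set x : Fin d → ℝ := (s.equivFin.symm k : Fin d → ℝ)
    have hzk : z k = ζ x := rfl
    rw [hzk]
    rintro (i | ⟨i, j⟩)
    · simp only [f, Sum.elim_inl, map_sub, MvPolynomial.eval_rename, MvPolynomial.eval_C, hζe]
      rw [← (hrep i).2 x hx.1, hx.2.1 i, sub_self]
    · simp only [f, Sum.elim_inr, map_sub, MvPolynomial.eval_rename, MvPolynomial.eval_C, hζe]
      rw [(hrep i).1.2.1 x hx.1 j, sub_zero]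
  · intro k w hw
    obtain ⟨hxU, _, hnd, hdet⟩ := hs _ (s.equivFin.symm k).2
    set x : Fin d → ℝ := (s.equivFin.symm k : Fin d → ℝ)
    have hzk : z k = ζ x := rfl
    rw [hzk] at hw
    let u : Fin d → ℝ := fun i => w (Sum.inl i)
    let v : ∀ i, Fin (M i) → ℝ := fun i j => w (Sum.inr ⟨i, j⟩)
    have hwe : ∀ i, w ∘ e i = Sum.elim u (v i) := by
      intro i
      ext (a | b) <;> rfl
    have hv : ∀ i, v i = fderiv ℝ (Φ i) x u := by
      intro i
      rw [← sub_eq_zero]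
      refine Matrix.eq_zero_of_mulVec_eq_zero (hdet i) ?_
      ext j
      have h1 := hw (Sum.inr ⟨i, j⟩)
      simp only [f, Sum.elim_inr] at h1
      rw [fderiv_rename, hζe, hwe] at h1
      have h2 := nash_chain hU (hrep i).1.1 (p i j) (f := fun _ => 0)
        (fun y hy => ((hrep i).1.2.1 y hy j).symm) hxU u
      rw [fderiv_fun_const] at h2
      rw [fderiv_mvPoly, Fintype.sum_sum_type] at h1 h2
      simp only [Sum.elim_inl, Sum.elim_inr, Pi.zero_apply, _root_.zero_apply] at h1 h2
      simp only [Matrix.mulVec, dotProduct, Matrix.of_apply, Pi.sub_apply, mul_sub,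
        Finset.sum_sub_distrib, Pi.zero_apply]
      linarith
    have hu : u = 0 := by
      apply hnd
      intro i
      have h1 := hw (Sum.inl i)
      simp only [f, Sum.elim_inl] at h1
      rw [fderiv_rename, hζe, hwe, hv] at h1
      rw [nash_chain hU (hrep i).1.1 (F i) (hrep i).2 hxU u, h1]
    ext (i | ⟨i, j⟩)
    · exact congrFun hu i
    · have := congrFun (hv i) j
      rw [hu, map_zero] at this
      exact this

theorem det_fderiv_eq {d : ℕ} (g : Fin d → (Fin d → ℝ) → ℝ) (x : Fin d → ℝ)
    (hg : ∀ i, DifferentiableAt ℝ (g i) x) :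
    Matrix.det (Matrix.of fun i j : Fin d => fderiv ℝ (g i) x (Pi.single j 1)) =
      (fderiv ℝ (fun x i => g i x) x).det := by
  rw [fderiv_pi hg]
  rw [ContinuousLinearMap.det, ← LinearMap.det_toMatrix']
  congr 1

theorem main_bound {d : ℕ} (hd : 0 < d) {U : Set (Fin d → ℝ)} (hU : IsOpen U)
    (g : Fin d → (Fin d → ℝ) → ℝ) (M : Fin d → ℕ) (Φ : ∀ i, (Fin d → ℝ) → Fin (M i) → ℝ)
    (p : ∀ i, Fin (M i) → MvPolynomial (Fin d ⊕ Fin (M i)) ℝ)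
    (F : ∀ i, MvPolynomial (Fin d ⊕ Fin (M i)) ℝ)
    (hrep : ∀ i, IsNashRep d (M i) U (g i) (Φ i) (p i) (F i))
    (A : Set (Fin d → ℝ)) (hA : MeasurableSet A) (hAU : A ⊆ U)
    (hb : ∀ x ∈ A, ∀ i, |g i x| ≤ 1) :
    (∫⁻ x in A, ENNReal.ofReal
        |Matrix.det (Matrix.of fun i j : Fin d => fderiv ℝ (g i) x (Pi.single j 1))|) ≤
      ((∏ i, ((F i).totalDegree * ∏ j, (p i j).totalDegree) : ℕ) : ENNReal) * 2 ^ d := by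
  classical
  have hga : ∀ i, AnalyticOnNhd ℝ (g i) U := fun i =>
    nash_analytic hU (hrep i).1.1 (F i) (hrep i).2
  let G : (Fin d → ℝ) → (Fin d → ℝ) := fun x i => g i x
  have hGa : AnalyticOnNhd ℝ G U := fun x hx => AnalyticAt.pi fun i => hga i x hx
  let D : ∀ i, (Fin d → ℝ) → ℝ := fun i x => Matrix.det (Matrix.of fun j j' : Fin (M i) =>
        MvPolynomial.eval (Sum.elim x (Φ i x)) (MvPolynomial.pderiv (Sum.inr j') (p i j)))
  have hDa : ∀ i, AnalyticOnNhd ℝ (D i) U := by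
    intro i
    refine nash_analytic hU (hrep i).1.1 (Matrix.det (Matrix.of fun j j' : Fin (M i) =>
      MvPolynomial.pderiv (Sum.inr j') (p i j))) ?_
    intro x _
    rw [RingHom.map_det]
    rfl
  have hDnull : ∀ i, volume {x | x ∈ U ∧ D i x = 0} = 0 := fun i =>
    null_of_analytic hd hU (hDa i) (hrep i).1.2.2
  have hGdet : ∀ x ∈ U, Matrix.det (Matrix.of fun i j : Fin d =>
      fderiv ℝ (g i) x (Pi.single j 1)) = (fderiv ℝ G x).det := fun x hx =>
    det_fderiv_eq g x fun i => (hga i x hx).differentiableAt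
  have hdm : Measurable fun x => (fderiv ℝ G x).det :=
    ContinuousLinearMap.continuous_det.measurable.comp (measurable_fderiv ℝ G)
  let Z : Set (Fin d → ℝ) := {x | (fderiv ℝ G x).det = 0}
  have hZ : MeasurableSet Z := hdm (measurableSet_singleton 0)
  let Q : Set (Fin d → ℝ) := ⋃ i, {x | x ∈ U ∧ D i x = 0}
  have hQ : MeasurableSet Q := by
    refine MeasurableSet.iUnion fun i => ?_
    have h1 : IsOpen (U ∩ D i ⁻¹' {0}ᶜ) :=
      (hDa i).continuousOn.isOpen_inter_preimage hU isOpen_compl_singleton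
    have : {x | x ∈ U ∧ D i x = 0} = U \ (U ∩ D i ⁻¹' {0}ᶜ) := by
      ext x; simp
    rw [this]
    exact hU.measurableSet.diff h1.measurableSet
  have hQ0 : volume Q = 0 := measure_iUnion_null hDnull
  let A' := (A \ Z) \ Q
  have hA' : MeasurableSet A' := (hA.diff hZ).diff hQ
  have hcov : A ⊆ A' ∪ ((A ∩ Z) ∪ Q) := by
    intro x hx
    by_cases h1 : x ∈ Z <;> by_cases h2 : x ∈ Q <;> simp [A', hx, h1, h2]
  let h : (Fin d → ℝ) → ENNReal := fun x => ENNReal.ofReal |(fderiv ℝ G x).det|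
  have hK : MeasurableSet (Icc (fun _ => -1 : Fin d → ℝ) (fun _ => 1)) := measurableSet_Icc
  calc _ = ∫⁻ x in A, h x := by
        refine setLIntegral_congr_fun hA fun x hx => ?_
        simp only [h, hGdet x (hAU hx)]
    _ ≤ ∫⁻ x in A' ∪ ((A ∩ Z) ∪ Q), h x := lintegral_mono_set hcov
    _ ≤ (∫⁻ x in A', h x) + ∫⁻ x in ((A ∩ Z) ∪ Q), h x := lintegral_union_le _ _ _
    _ ≤ (∫⁻ x in A', h x) + ((∫⁻ x in A ∩ Z, h x) + ∫⁻ x in Q, h x) := by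
        gcongr; exact lintegral_union_le _ _ _
    _ = ∫⁻ x in A', h x := by
        have e1 : ∫⁻ x in A ∩ Z, h x = 0 := by
          rw [setLIntegral_congr_fun (hA.inter hZ) (g := fun _ => 0), lintegral_zero]
          intro x hx
          have : (fderiv ℝ G x).det = 0 := hx.2
          simp [h, this]
        have e2 : ∫⁻ x in Q, h x = 0 := setLIntegral_measure_zero _ _ hQ0
        rw [e1, e2]; simp
    _ ≤ _ := area_bound G A' hA' (fun x hx => (hGa x (hAU hx.1.1)).hasStrictFDerivAt)
        (fun x hx => hx.1.2) _ hK (fun x hx => by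
          have := hb x hx.1.1
          exact ⟨fun i => (abs_le.1 (this i)).1, fun i => (abs_le.1 (this i)).2⟩) _ (by
          intro t s hs
          refine fibre_bound hU g M Φ p F hrep t s fun x hx => ?_
          obtain ⟨hxA, hxt⟩ := hs x hx
          have hxU := hAU hxA.1.1
          refine ⟨hxU, fun i => congrFun hxt i, fun u hu => ?_, fun i hi => ?_⟩
          · have hne : (fderiv ℝ G x).det ≠ 0 := hxA.1.2
            have h0 : fderiv ℝ G x u = 0 := by
              have : fderiv ℝ G x = _ := fderiv_pi (fun i => (hga i x hxU).differentiableAt)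
              rw [this]
              ext i
              exact hu i
            by_contra hu0
            apply hne
            refine LinearMap.det_eq_zero_iff_ker_ne_bot.2 ?_
            rw [Submodule.ne_bot_iff]
            exact ⟨u, h0, hu0⟩
          · exact hxA.2 (mem_iUnion.2 ⟨i, hxU, hi⟩))
    _ = _ := by
        rw [Real.volume_Icc_pi]
        norm_num

end Helpers

theorem statement14 (d : ℕ) (hd : 0 < d) (U : Set (Fin d → ℝ)) (hU : IsOpen U)
    (g : Fin d → (Fin d → ℝ) → ℝ) (hg : ∀ i, IsNash d U (g i))
    (A : Set (Fin d → ℝ)) (hA : MeasurableSet A) (hAU : A ⊆ U)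
    (hb : ∀ x ∈ A, ∀ i, |g i x| ≤ 1) :
    (∫⁻ x in A, ENNReal.ofReal
        |Matrix.det (Matrix.of fun i j : Fin d => fderiv ℝ (g i) x (Pi.single j 1))|) ≤
      ENNReal.ofReal ((2 : ℝ) ^ d * ∏ i : Fin d, (complexity d U (g i) : ℝ)) := by
  classical
  by_cases hz : ∃ i, ∀ x ∈ U, g i x = 0
  · obtain ⟨i, hi⟩ := hz
    have : ∫⁻ x in A, ENNReal.ofReal
        |Matrix.det (Matrix.of fun i j : Fin d => fderiv ℝ (g i) x (Pi.single j 1))| = 0 := by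
      rw [MeasureTheory.setLIntegral_congr_fun hA (g := fun _ => 0), MeasureTheory.lintegral_zero]
      intro x hx
      have h0 : fderiv ℝ (g i) x = 0 := by
        have : g i =ᶠ[nhds x] fun _ => 0 := by
          filter_upwards [hU.mem_nhds (hAU hx)] with y hy using hi y hy
        rw [this.fderiv_eq, fderiv_fun_const]
        rfl
      have h1 := Matrix.det_eq_zero_of_row_eq_zero
        (A := Matrix.of fun i j : Fin d => fderiv ℝ (g i) x (Pi.single j 1)) i
        (fun j => by simp [h0])
      simp [h1]
    rw [this]
    exact bot_le
  · push Not at hz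
    have hmem : ∀ i, ∃ (M : ℕ) (Φ : (Fin d → ℝ) → Fin M → ℝ)
        (p : Fin M → MvPolynomial (Fin d ⊕ Fin M) ℝ)
        (F : MvPolynomial (Fin d ⊕ Fin M) ℝ), IsNashRep d M U (g i) Φ p F ∧
        complexity d U (g i) = F.totalDegree * ∏ j, (p j).totalDegree := by
      intro i
      have hne : ¬ ∀ x ∈ U, g i x = 0 := by
        push Not
        exact hz i
      unfold complexity
      rw [if_neg hne]
      obtain ⟨M, Φ, p, F, h⟩ := hg i
      exact Nat.sInf_mem (s := { c : ℕ | ∃ (M : ℕ) (Φ : (Fin d → ℝ) → Fin M → ℝ)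
        (p : Fin M → MvPolynomial (Fin d ⊕ Fin M) ℝ)
        (F : MvPolynomial (Fin d ⊕ Fin M) ℝ), IsNashRep d M U (g i) Φ p F ∧
        c = F.totalDegree * ∏ j, (p j).totalDegree }) ⟨_, M, Φ, p, F, h, rfl⟩
    choose M Φ p F hrep hc using hmem
    refine (main_bound hd hU g M Φ p F hrep A hA hAU hb).trans (le_of_eq ?_)
    simp only [hc]
    rw [mul_comm, ENNReal.ofReal_mul (by positivity), ENNReal.ofReal_pow (by norm_num)]
    rw [← Nat.cast_prod, ENNReal.ofReal_natCast]
    norm_num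

end StatementFourteen
end
end

section
/- For every positive integer d₁, every positive integer s, and every ε ∈ (0,1), there exists a constant c > 0 such that every homogeneous real polynomial P of degree s in d₁ variables satisfies λ({ t ∈ 𝔹 : |P(t)| < c · sup_{t' ∈ 𝔹} |P(t')| }) ≤ ε · λ(𝔹), where 𝔹 is the closed Euclidean unit ball in ℝ^{d₁} and λ denotes Lebesgue measure. -/
open MeasureTheory
open scoped BigOperators ENNReal

theorem zero_null_pi : ∀ (n : ℕ) (p : MvPolynomial (Fin n) ℝ), p ≠ 0 →
    volume {x : Fin n → ℝ | MvPolynomial.eval x p = 0} = 0 := by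
  intro n
  induction n with
  | zero =>
    intro p hp
    have : {x : Fin 0 → ℝ | MvPolynomial.eval x p = 0} = ∅ := by
      rw [Set.eq_empty_iff_forall_notMem]
      intro x hx
      apply hp
      apply MvPolynomial.funext
      intro y
      rw [Subsingleton.elim y x]
      simpa using hx
    rw [this]; simp
  | succ n ih =>
    intro p hp
    have hmp := volume_preserving_piFinSuccAbove (fun _ : Fin (n+1) => ℝ) 0
    have hcont : Continuous fun z : ℝ × (Fin n → ℝ) =>
        MvPolynomial.eval (Fin.cons z.1 z.2 : Fin (n+1) → ℝ) p := by
      apply (MvPolynomial.continuous_eval p).comp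
      apply continuous_pi
      intro i
      refine Fin.cases ?_ (fun j => ?_) i
      · simpa using continuous_fst
      · simp only [Fin.cons_succ]; fun_prop
    have hm : MeasurableSet {z : ℝ × (Fin n → ℝ) |
        MvPolynomial.eval (Fin.cons z.1 z.2 : Fin (n+1) → ℝ) p = 0} :=
      (isClosed_eq hcont continuous_const).measurableSet
    have h0 : volume {z : ℝ × (Fin n → ℝ) |
        MvPolynomial.eval (Fin.cons z.1 z.2 : Fin (n+1) → ℝ) p = 0} = 0 := by
      rw [Measure.volume_eq_prod, Measure.measure_prod_null hm]
      set q := MvPolynomial.finSuccEquiv ℝ n p with hq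
      have hq0 : q ≠ 0 := by
        rw [hq]; simpa using hp
      have hfin : Set.Finite {y : ℝ | q.eval (MvPolynomial.C y) = 0} := by
        have h1 : Set.Finite {r | q.IsRoot r} := Polynomial.finite_setOfPred_isRoot hq0
        exact h1.preimage (MvPolynomial.C_injective _ _).injOn
      have hae : ∀ᵐ y : ℝ, y ∉ {y : ℝ | q.eval (MvPolynomial.C y) = 0} :=
        measure_eq_zero_iff_ae_notMem.1 (hfin.measure_zero volume)
      filter_upwards [hae] with y hy
      have := ih _ hy
      refine Eq.trans (congrArg _ ?_) this
      ext x
      simp only [Set.mem_preimage, Set.mem_ofPred_eq]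
      rw [hq, MvPolynomial.eval_polynomial_eval_finSuccEquiv, MvPolynomial.eval_C]
      exact Iff.rfl
    have := hmp.measure_preimage hm.nullMeasurableSet
    rw [h0] at this
    convert this using 2
    ext x
    simp only [Set.mem_preimage, Set.mem_ofPred_eq]
    have : (Fin.cons ((MeasurableEquiv.piFinSuccAbove (fun _ : Fin (n+1) => ℝ) 0) x).1 ((MeasurableEquiv.piFinSuccAbove (fun _ : Fin (n+1) => ℝ) 0) x).2 : Fin (n+1) → ℝ) = x := by
      ext i
      refine Fin.cases ?_ (fun j => ?_) i <;> simp [MeasurableEquiv.piFinSuccAbove, Fin.tail]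
    rw [this]

theorem zero_null_euc (n : ℕ) (p : MvPolynomial (Fin n) ℝ) (hp : p ≠ 0) :
    volume {x : EuclideanSpace ℝ (Fin n) | MvPolynomial.eval (fun i => x i) p = 0} = 0 := by
  have h := zero_null_pi n p hp
  have hm : MeasurableSet {x : Fin n → ℝ | MvPolynomial.eval x p = 0} :=
    (isClosed_eq (MvPolynomial.continuous_eval p) continuous_const).measurableSet
  have := (EuclideanSpace.volume_preserving_symm_measurableEquiv_toLp (Fin n)).measure_preimage
    hm.nullMeasurableSet
  rw [h] at this
  exact this

/-- compactness -/
theorem compact_part {A E : Type*} [TopologicalSpace A] [TopologicalSpace E]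
    [MeasurableSpace E] [BorelSpace E] (μ : Measure E)
    (F : A → E → ℝ) (hF : Continuous (Function.uncurry F))
    (K : Set A) (hK : IsCompact K) (B : Set E) (hB : IsCompact B) (hBm : MeasurableSet B)
    (hfin : μ B ≠ ∞) (hnull : ∀ a ∈ K, μ {t | F a t = 0} = 0) (η : ℝ≥0∞) (hη : 0 < η) :
    ∃ c : ℝ, 0 < c ∧ ∀ a ∈ K, μ {t | t ∈ B ∧ |F a t| < c} ≤ η := by
  refine hK.induction_on (p := fun S => ∃ c : ℝ, 0 < c ∧ ∀ a ∈ S, μ {t | t ∈ B ∧ |F a t| < c} ≤ η)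
    ⟨1, one_pos, by simp⟩ ?_ ?_ ?_
  · rintro S T hST ⟨c, hc, h⟩
    exact ⟨c, hc, fun a ha => h a (hST ha)⟩
  · rintro S T ⟨c, hc, h⟩ ⟨c', hc', h'⟩
    refine ⟨min c c', lt_min hc hc', ?_⟩
    rintro a (ha | ha)
    · refine (measure_mono ?_).trans (h a ha)
      intro t ht
      exact ⟨ht.1, ht.2.trans_le (min_le_left _ _)⟩
    · refine (measure_mono ?_).trans (h' a ha)
      intro t ht
      exact ⟨ht.1, ht.2.trans_le (min_le_right _ _)⟩
  · intro a ha
    have hFa : ∀ a, Continuous (F a) := fun a => hF.comp (by fun_prop : Continuous fun t => (a, t))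
    let S : ℕ → Set E := fun n => {t | t ∈ B ∧ |F a t| < 1 / ((n : ℝ) + 1)}
    have hSm : ∀ n, MeasurableSet (S n) := fun n =>
      hBm.inter (isOpen_lt (hFa a).abs continuous_const).measurableSet
    have hanti : Antitone S := by
      intro m n hmn t ht
      exact ⟨ht.1, ht.2.trans_le (one_div_le_one_div_of_le (by positivity) (by gcongr))⟩
    have hlim := tendsto_measure_iInter_atTop (μ := μ) (fun n => (hSm n).nullMeasurableSet) hanti
      ⟨0, ne_top_of_le_ne_top hfin (measure_mono fun t ht => ht.1)⟩
    have hz : μ (⋂ n, S n) = 0 := by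
      refine measure_mono_null ?_ (hnull a ha)
      intro t ht
      rw [Set.mem_iInter] at ht
      by_contra hne
      obtain ⟨n, hn⟩ := exists_nat_one_div_lt (abs_pos.2 hne)
      exact lt_asymm hn (ht n).2
    rw [hz] at hlim
    obtain ⟨n, hn⟩ := (hlim.eventually (gt_mem_nhds hη)).exists
    set δ : ℝ := 1 / ((n : ℝ) + 1) with hδ
    have hδ0 : 0 < δ := by positivity
    have hev : ∀ᶠ b in nhds a, ∀ t ∈ B, |F b t - F a t| < δ / 2 := by
      have hG : Continuous fun z : A × E => |F z.1 z.2 - F a z.2| :=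
        (hF.sub ((hFa a).comp continuous_snd)).abs
      refine hB.eventually_forall_of_forall_eventually fun t _ => ?_
      exact hG.continuousAt.eventually (gt_mem_nhds (by simp; positivity))
    refine ⟨_, mem_nhdsWithin_of_mem_nhds hev, δ / 2, by positivity, ?_⟩
    intro b hb
    refine (measure_mono ?_).trans hn.le
    intro t ht
    refine ⟨ht.1, ?_⟩
    have h1 := hb t ht.1
    have h2 := ht.2
    change |F a t| < δ
    rw [abs_lt] at *
    constructor <;> linarith [h1.1, h1.2, h2.1, h2.2]

theorem statement15 (d₁ : ℕ) (hd₁ : 0 < d₁) (s : ℕ) (hs : 0 < s)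
    (ε : ℝ) (hε0 : 0 < ε) (hε1 : ε < 1) :
    ∃ c : ℝ, 0 < c ∧
      ∀ P : MvPolynomial (Fin d₁) ℝ, P.IsHomogeneous s →
        volume { t : EuclideanSpace ℝ (Fin d₁) |
            t ∈ Metric.closedBall (0 : EuclideanSpace ℝ (Fin d₁)) 1 ∧
            |MvPolynomial.eval (fun i => t i) P| <
              c * sSup ((fun t' : EuclideanSpace ℝ (Fin d₁) =>
                |MvPolynomial.eval (fun i => t' i) P|) ''
                  Metric.closedBall (0 : EuclideanSpace ℝ (Fin d₁)) 1) } ≤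
          ENNReal.ofReal ε *
            volume (Metric.closedBall (0 : EuclideanSpace ℝ (Fin d₁)) 1) := by
  set B := Metric.closedBall (0 : EuclideanSpace ℝ (Fin d₁)) 1 with hBdef
  have hB : IsCompact B := isCompact_closedBall _ _
  have hne : B.Nonempty := ⟨0, by simp [hBdef]⟩
  let M := (Finset.univ : Finset (Fin d₁)).finsuppAntidiag s
  let p : (M → ℝ) → MvPolynomial (Fin d₁) ℝ := fun a => ∑ m : M, MvPolynomial.monomial m.1 (a m)
  let F : (M → ℝ) → EuclideanSpace ℝ (Fin d₁) → ℝ := fun a t => MvPolynomial.eval (fun i => t i) (p a)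
  have hFeq : ∀ a t, F a t = ∑ m : M, a m * ∏ i, t i ^ (m.1 i) := by
    intro a t
    simp [F, p, MvPolynomial.eval_monomial, Finsupp.prod_fintype]
  have hF : Continuous (Function.uncurry F) := by
    have : Function.uncurry F = fun z => ∑ m : M, z.1 m * ∏ i, z.2 i ^ (m.1 i) := by
      ext z; exact hFeq _ _
    rw [this]; fun_prop
  have hp0 : ∀ a, p a = 0 → a = 0 := by
    intro a h
    ext m
    have := congrArg (MvPolynomial.coeff m.1) h
    simpa [p, MvPolynomial.coeff_sum, MvPolynomial.coeff_monomial, Subtype.val_inj] using this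
  have hK : IsCompact (Metric.sphere (0 : M → ℝ) 1) := isCompact_sphere _ _
  have hη : 0 < ENNReal.ofReal ε * volume B :=
    ENNReal.mul_pos (by simpa using hε0) (Metric.measure_closedBall_pos _ _ one_pos).ne'
  obtain ⟨c, hc, H⟩ := compact_part volume F hF _ hK B hB hB.measurableSet hB.measure_lt_top.ne
    (fun a ha => zero_null_euc d₁ (p a) (fun h => by simp [hp0 a h] at ha)) _ hη
  obtain ⟨C, hC⟩ := (hK.prod hB).exists_bound_of_continuousOn hF.continuousOn
  have hC1 : 0 < max C 1 := by positivity
  refine ⟨c / max C 1, by positivity, fun P hP => ?_⟩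
  by_cases hP0 : P = 0
  · subst hP0
    have : (fun t' : EuclideanSpace ℝ (Fin d₁) =>
                |MvPolynomial.eval (fun i => t' i) (0 : MvPolynomial (Fin d₁) ℝ)|) '' B = {0} := by
      simpa using hne.image_const (0:ℝ)
    rw [this]
    simp
  let a : M → ℝ := fun m => P.coeff m.1
  have hpa : p a = P := by
    ext m
    simp only [p, MvPolynomial.coeff_sum, MvPolynomial.coeff_monomial]
    by_cases hm : m ∈ M
    · rw [Finset.sum_eq_single ⟨m, hm⟩] <;> simp +contextual [a, Subtype.ext_iff]
    · rw [Finset.sum_eq_zero]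
      · symm
        by_contra hne0
        apply hm
        have := hP hne0
        simp only [M, Finset.mem_finsuppAntidiag, Finset.subset_univ, and_true]
        rw [← this]
        simp [Finsupp.weight_apply, Finsupp.sum_fintype]
      · intro x _
        rw [if_neg]
        rintro rfl
        exact hm x.2
  have ha0 : a ≠ 0 := by
    intro h
    apply hP0
    rw [← hpa, h]
    simp [p]
  have hr : 0 < ‖a‖ := norm_pos_iff.2 ha0
  have hmem : ‖a‖⁻¹ • a ∈ Metric.sphere (0 : M → ℝ) 1 := by
    simp [norm_smul, hr.ne']
  have hev : ∀ t : EuclideanSpace ℝ (Fin d₁),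
      |MvPolynomial.eval (fun i => t i) P| = ‖a‖ * |F (‖a‖⁻¹ • a) t| := by
    intro t
    have h1 : F (‖a‖⁻¹ • a) t = ‖a‖⁻¹ * F a t := by
      rw [hFeq, hFeq, Finset.mul_sum]
      simp [mul_assoc]
    have h2 : F a t = MvPolynomial.eval (fun i => t i) P := by simp only [F, hpa]
    rw [h1, abs_mul, abs_of_pos (inv_pos.2 hr), h2, mul_inv_cancel_left₀ hr.ne']
  have hsup : sSup ((fun t' : EuclideanSpace ℝ (Fin d₁) =>
                |MvPolynomial.eval (fun i => t' i) P|) '' B) ≤ ‖a‖ * max C 1 := by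
    apply csSup_le (hne.image _)
    rintro _ ⟨t, ht, rfl⟩
    simp only [hev]
    gcongr
    exact (hC (_, t) ⟨hmem, ht⟩).trans (le_max_left _ _)
  refine (measure_mono ?_).trans (H _ hmem)
  intro t ht
  refine ⟨ht.1, ?_⟩
  have h1 := ht.2
  rw [hev] at h1
  have h2 : ‖a‖ * |F (‖a‖⁻¹ • a) t| < ‖a‖ * c := by
    refine h1.trans_le ((mul_le_mul_of_nonneg_left hsup (by positivity)).trans_eq ?_)
    field_simp
  exact lt_of_mul_lt_mul_left h2 hr.le
end

section
/- Let n, k, d₁ be positive integers with n > k and set n₁ := d₁ + k. Let U ⊆ ℝ^n × ℝ^{d₁} be open, let φ : U → ℝ^k be smooth, suppose the Jacobian matrix D_xφ (derivatives in the x variables) has rank k at a point (x*, t*) ∈ U, and put γ_t(x) := (t, φ(x,t)) ∈ ℝ^{n₁}. Then there is an open neighborhood V ⊆ U of (x*, t*) with the following property: for every p ∈ [1, ∞] and every continuous η : ℝ^n × ℝ^{n₁} → ℝ such that the closure of {(x,t) ∈ U : η(x, γ_t(x)) ≠ 0} is compact and contained in V, there is a finite constant C such that ‖ ∫_{ℝ^{d₁}}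 f(γ_t(·)) |η(·, γ_t(·))| dt ‖_{L^p(ℝ^n)} ≤ C ‖f‖_{L^p(ℝ^{n₁})} for every nonnegative Borel measurable f on ℝ^{n₁}. -/
noncomputable section

open MeasureTheory
open scoped BigOperators ENNReal NNReal

namespace Statement16

abbrev E (n : ℕ) : Type := EuclideanSpace ℝ (Fin n)

lemma vol_le {X Y : Type*} [NormedAddCommGroup X] [NormedSpace ℝ X] [FiniteDimensional ℝ X]
    [MeasurableSpace X] [BorelSpace X] [NormedAddCommGroup Y] [NormedSpace ℝ Y]
    [FiniteDimensional ℝ Y] [MeasurableSpace Y] [BorelSpace Y]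
    (h : Module.finrank ℝ X = Module.finrank ℝ Y)
    (μ : Measure X) [μ.IsAddHaarMeasure] (ν : Measure Y) [ν.IsAddHaarMeasure] (K : ℝ≥0) :
    ∃ C : ℝ≥0, ∀ (s : Set X) (f : X → Y), AntilipschitzWith K (s.domRestrict f) →
      μ s ≤ C * ν (f '' s) := by
  have h1 := Measure.isAddLeftInvariant_eq_smul μ (μH[Module.finrank ℝ X] : Measure X)
  have h2 := Measure.isAddLeftInvariant_eq_smul (μH[Module.finrank ℝ Y] : Measure Y) ν
  set a := Measure.addHaarScalarFactor μ (μH[Module.finrank ℝ X] : Measure X)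
  set b := Measure.addHaarScalarFactor (μH[Module.finrank ℝ Y] : Measure Y) ν
  refine ⟨a * (K ^ (Module.finrank ℝ Y) * b), fun s f hf => ?_⟩
  have h3 := hf.le_hausdorffMeasure_image (d := Module.finrank ℝ Y) (by positivity) Set.univ
  have h4 : (s.domRestrict f) '' Set.univ = f '' s := by
    rw [Set.image_univ]; exact Set.range_domRestrict f s
  have h5 : μH[Module.finrank ℝ X] s = μH[Module.finrank ℝ X] (Set.univ : Set s) := by
    have := (isometry_subtype_coe (s := s)).hausdorffMeasure_image
      (d := (Module.finrank ℝ X : ℝ)) (Or.inl (by positivity)) Set.univ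
    rw [← this]; simp
  rw [h1, Measure.smul_apply, h5, h]
  rw [h4, h2, Measure.smul_apply] at h3
  simp only [ENNReal.smul_def, smul_eq_mul, ENNReal.rpow_natCast] at h3 ⊢
  push_cast
  rw [mul_assoc, mul_assoc]
  gcongr

lemma exists_equiv {n k : ℕ} (A : E n →L[ℝ] E k) (hA : Function.Surjective A) :
    ∃ (P : E n →L[ℝ] A.ker) (L : E n ≃L[ℝ] (E k × A.ker)), (L : E n →L[ℝ] _) = A.prod P := by
  obtain ⟨P, hP⟩ := A.ker_closedComplemented_of_finiteDimensional_range
  refine ⟨P, ContinuousLinearEquiv.ofBijective (A.prod P) ?_ ?_, ?_⟩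
  · rw [LinearMap.ker_eq_bot']
    intro x hx
    have h1 : A x = 0 := congrArg Prod.fst hx
    have h2 : P x = 0 := congrArg Prod.snd hx
    have := hP ⟨x, h1⟩
    rw [h2] at this
    exact (congrArg Subtype.val this).symm
  · rw [LinearMap.range_eq_top]
    rintro ⟨a, b⟩
    obtain ⟨x, rfl⟩ := hA a
    refine ⟨x - P x + b, Prod.ext ?_ ?_⟩
    · have h1 : A (P x : E n) = 0 := (P x).2
      have h2 : A (b : E n) = 0 := b.2
      simp [h1, h2]
    · simp [hP]
  · ext x <;> rfl

/-- Slices: uniform bound for push-forwards. -/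
lemma slice {n k d : ℕ} (φ : E n × E d → E k) (xs : E n) (ts : E d)
    (hφ : HasStrictFDerivAt φ (fderiv ℝ φ (xs, ts)) (xs, ts))
    (hA : Function.Surjective ((fderiv ℝ φ (xs, ts)).comp (ContinuousLinearMap.inl ℝ (E n) (E d)))) :
    ∃ W ∈ nhds (xs, ts), ∃ C : ℝ≥0, ∀ (t : E d) (B : Set (E k)),
      volume {x | (x, t) ∈ W ∧ φ (x, t) ∈ B} ≤ C * volume B := by
  set D := fderiv ℝ φ (xs, ts)
  set A := D.comp (ContinuousLinearMap.inl ℝ (E n) (E d)) with hAdef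
  obtain ⟨P, L, hL⟩ := exists_equiv A hA
  obtain ⟨c, hc0, hc⟩ : ∃ c : ℝ≥0, 0 < c ∧ (Subsingleton (E n) ∨
      c < ‖(L.symm : (E k × A.ker) →L[ℝ] E n)‖₊⁻¹) := by
    rcases subsingleton_or_nontrivial (E n) with h | h
    · exact ⟨1, one_pos, Or.inl h⟩
    · have : 0 < ‖(L.symm : (E k × A.ker) →L[ℝ] E n)‖₊⁻¹ := by
        rw [inv_pos]
        exact L.nnnorm_symm_pos
      obtain ⟨c, h1, h2⟩ := exists_between this
      exact ⟨c, h1, Or.inr h2⟩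
  obtain ⟨W, hW, happ⟩ := hφ.approximates_deriv_on_nhds (c := c) (Or.inr hc0)
  set K := (‖(L.symm : (E k × A.ker) →L[ℝ] E n)‖₊⁻¹ - c)⁻¹
  obtain ⟨C, hC⟩ := vol_le L.toLinearEquiv.finrank_eq (volume : Measure (E n))
    ((volume : Measure (E k)).prod (volume : Measure A.ker)) K
  let R : Set A.ker := Metric.ball (P xs) 1
  refine ⟨W ∩ {q | P q.1 ∈ R}, Filter.inter_mem hW ?_, C * (volume R).toNNReal, ?_⟩
  · apply IsOpen.mem_nhds
    · exact Metric.isOpen_ball.preimage (by fun_prop)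
    · simp [R]
  intro t B
  set s : Set (E n) := {x | (x, t) ∈ W ∩ {q | P q.1 ∈ R} ∧ φ (x, t) ∈ B}
  have key : ApproximatesLinearOn (fun x => (φ (x, t), P x)) (L : E n →L[ℝ] E k × A.ker) s c := by
    intro x hx y hy
    have := happ (x, t) hx.1.1 (y, t) hy.1.1
    have e : ((x, t) - (y, t) : E n × E d) = (x - y, 0) := by simp
    rw [e] at this
    rw [hL]
    have e2 : ((φ (x, t), P x) - (φ (y, t), P y) - (A.prod P) (x - y) : E k × A.ker)
        = (φ (x, t) - φ (y, t) - D (x - y, 0), 0) := by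
      simp [hAdef]
    rw [e2]
    simpa [Prod.norm_def] using this
  have h1 := hC s _ (key.antilipschitz hc)
  have h2 : (fun x => (φ (x, t), P x)) '' s ⊆ B ×ˢ R := by
    rintro _ ⟨x, hx, rfl⟩
    exact ⟨hx.2, hx.1.2⟩
  have hR : volume R ≠ ∞ := measure_ball_lt_top.ne
  calc volume s ≤ _ := h1
    _ ≤ C * ((volume : Measure (E k)).prod (volume : Measure A.ker)) (B ×ˢ R) := by gcongr
    _ = _ := by
      rw [Measure.prod_prod]; push_cast; rw [ENNReal.coe_toNNReal hR]; ring

lemma surj {n k d : ℕ} (φ : E n × E d → E k) (xs : E n) (ts : E d)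
    (hφ : HasStrictFDerivAt φ (fderiv ℝ φ (xs, ts)) (xs, ts))
    (hrank : LinearMap.rank (fderiv ℝ (fun x : E n => φ (x, ts)) xs).toLinearMap
      = (k : Cardinal)) :
    Function.Surjective ((fderiv ℝ φ (xs, ts)).comp (ContinuousLinearMap.inl ℝ (E n) (E d))) := by
  have h1 : HasFDerivAt (fun x : E n => φ (x, ts))
      ((fderiv ℝ φ (xs, ts)).comp (ContinuousLinearMap.inl ℝ (E n) (E d))) xs :=
    HasFDerivAt.comp xs (f := fun x : E n => (x, ts)) (g := φ) hφ.hasFDerivAt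
      (hasFDerivAt_prodMk_left xs ts)
  rw [h1.fderiv] at hrank
  set A := (fderiv ℝ φ (xs, ts)).comp (ContinuousLinearMap.inl ℝ (E n) (E d))
  have : LinearMap.range A.toLinearMap = ⊤ := by
    apply Submodule.eq_top_of_finrank_eq
    have := congrArg Cardinal.toNat hrank
    rw [finrank_euclideanSpace_fin]
    simpa [LinearMap.rank, Module.finrank] using this
  exact LinearMap.range_eq_top.1 this

lemma map_le {n k d : ℕ} (φ : E n × E d → E k) (W K : Set (E n × E d)) (C : ℝ≥0)
    (hC : ∀ (t : E d) (B : Set (E k)),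
      volume {x | (x, t) ∈ W ∧ φ (x, t) ∈ B} ≤ C * volume B)
    (hK : MeasurableSet K) (hKW : K ⊆ W) (ψ : E n × E d → E k) (hψ : Measurable ψ)
    (he : ∀ q ∈ K, ψ q = φ q) :
    Measure.map (fun q : E n × E d => (q.2, ψ q)) (volume.restrict K) ≤
      C • (volume : Measure (E d × E k)) := by
  have hm : Measurable (fun q : E n × E d => (q.2, ψ q)) := by fun_prop
  refine Measure.le_iff.2 fun s hs => ?_
  rw [Measure.map_apply hm hs, Measure.restrict_apply (hm hs), Measure.smul_apply,
    Measure.volume_eq_prod, Measure.volume_eq_prod, Measure.prod_apply hs,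
    Measure.prod_apply_symm ((hm hs).inter hK), ENNReal.smul_def, smul_eq_mul,
    ← lintegral_const_mul _ (measurable_measure_prodMk_left hs)]
  refine lintegral_mono fun t => ?_
  refine le_trans (measure_mono ?_) (hC t (Prod.mk t ⁻¹' s))
  rintro x ⟨h1, h2⟩
  refine ⟨hKW h2, ?_⟩
  have := he _ h2
  simpa [this] using h1

/-- integrating in `t` over a finite measure set is bounded on `L^p`. -/
lemma int_bound {n d : ℕ} (g : E n × E d → ℝ) (hg : Measurable g) (T : Set (E d))
    (p : ℝ≥0∞) (hp : 1 ≤ p) (h : E n → ℝ) (M : ℝ≥0)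
    (hh : ∀ x, ‖h x‖ₑ ≤ M * ∫⁻ t in T, ‖g (x, t)‖ₑ) :
    eLpNorm h p volume ≤
      M * (volume T ^ (1 - 1 / p.toReal)) * eLpNorm g p (volume : Measure (E n × E d)) := by
  have hs : ∀ x, AEStronglyMeasurable (fun t => g (x, t)) (volume.restrict T) := fun x =>
    (hg.comp measurable_prodMk_left).aestronglyMeasurable
  have h1 : ∀ x, ‖h x‖ₑ ≤ M * (volume T ^ (1 - 1 / p.toReal)) *
      eLpNorm (fun t => g (x, t)) p volume := by
    intro x
    refine (hh x).trans ?_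
    rw [← eLpNorm_one_eq_lintegral_enorm, mul_assoc]
    gcongr
    refine (eLpNorm_le_eLpNorm_mul_rpow_measure_univ hp (hs x)).trans ?_
    rw [mul_comm]
    simp only [Measure.restrict_apply_univ, ENNReal.toReal_one, div_one]
    gcongr
    exact Measure.restrict_le_self
  set A := M * (volume T ^ (1 - 1 / p.toReal))
  by_cases hpt : p = ∞
  · subst hpt
    simp only [eLpNorm_exponent_top]
    have h2 : ∀ᵐ q ∂(volume : Measure (E n × E d)), ‖g q‖ₑ ≤ eLpNormEssSup g volume :=
      enorm_ae_le_eLpNormEssSup g volume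
    have h3 := Measure.ae_ae_of_ae_prod h2
    refine essSup_le_of_ae_le _ ?_
    filter_upwards [h3] with x hx
    refine (h1 x).trans ?_
    gcongr
    rw [eLpNorm_exponent_top]
    exact essSup_le_of_ae_le _ hx
  · have hp0 : p ≠ 0 := (one_pos.trans_le hp).ne'
    have hr : 0 < p.toReal := ENNReal.toReal_pos hp0 hpt
    rw [← ENNReal.rpow_le_rpow_iff hr, ENNReal.mul_rpow_of_nonneg _ _ hr.le]
    have e : ∀ {α : Type} [MeasureSpace α] (u : α → ℝ), eLpNorm u p volume ^ p.toReal =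
        ∫⁻ a, ‖u a‖ₑ ^ p.toReal := by
      intro α _ u
      rw [eLpNorm_eq_lintegral_rpow_enorm_toReal hp0 hpt, ← ENNReal.rpow_mul,
        one_div_mul_cancel hr.ne', ENNReal.rpow_one]
    have hgm : Measurable fun q => ‖g q‖ₑ ^ p.toReal := by fun_prop
    rw [e, e, Measure.volume_eq_prod, lintegral_prod _ hgm.aemeasurable,
      ← lintegral_const_mul _ hgm.lintegral_prod_right']
    refine lintegral_mono fun x => ?_
    refine (ENNReal.rpow_le_rpow (h1 x) hr.le).trans ?_
    rw [ENNReal.mul_rpow_of_nonneg _ _ hr.le, e]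

theorem statement16
    (n k d₁ : ℕ) (hk : 0 < k) (hd₁ : 0 < d₁) (hkn : k < n)
    (U : Set (E n × E d₁)) (hU : IsOpen U)
    (φ : E n × E d₁ → E k) (hφ : ContDiffOn ℝ (⊤ : ℕ∞) φ U)
    (xs : E n) (ts : E d₁) (hmem : (xs, ts) ∈ U)
    (hrank : LinearMap.rank (fderiv ℝ (fun x : E n => φ (x, ts)) xs).toLinearMap
      = (k : Cardinal)) :
    ∃ V : Set (E n × E d₁), IsOpen V ∧ (xs, ts) ∈ V ∧ V ⊆ U ∧
      ∀ p : ℝ≥0∞, 1 ≤ p →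
        ∀ η : E n × (E d₁ × E k) → ℝ, Continuous η →
          HasCompactSupport (fun q : E n × E d₁ => η (q.1, (q.2, φ q))) →
          tsupport (fun q : E n × E d₁ => η (q.1, (q.2, φ q))) ⊆ V →
          ∃ C : ℝ≥0, ∀ f : E d₁ × E k → ℝ, 0 ≤ f → Measurable f →
            eLpNorm (fun x : E n =>
                ∫ t : E d₁, f (t, φ (x, t)) * |η (x, (t, φ (x, t)))|) p volume ≤
              C * eLpNorm f p volume := by
  have hst : HasStrictFDerivAt φ (fderiv ℝ φ (xs, ts)) (xs, ts) :=
    (hφ.contDiffAt (hU.mem_nhds hmem)).hasStrictFDerivAt (by simp)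
  obtain ⟨W, hW, C₀, hC₀⟩ := slice φ xs ts hst (surj φ xs ts hst hrank)
  have hC : ∀ (t : E d₁) (B : Set (E k)),
      volume {x | (x, t) ∈ W ∧ φ (x, t) ∈ B} ≤ (C₀ + 1 : ℝ≥0) * volume B := fun t B =>
    (hC₀ t B).trans (by gcongr; simp)
  refine ⟨interior W ∩ U, isOpen_interior.inter hU, ⟨mem_interior_iff_mem_nhds.2 hW, hmem⟩,
    Set.inter_subset_right, ?_⟩
  intro p hp η hη hcs hsub
  set K := tsupport (fun q : E n × E d₁ => η (q.1, (q.2, φ q))) with hKdef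
  have hK : IsCompact K := hcs
  have hKm : MeasurableSet K := hK.isClosed.measurableSet
  have hφK : ContinuousOn φ K := hφ.continuousOn.mono fun q hq => (hsub hq).2
  have hηK : ContinuousOn (fun q : E n × E d₁ => η (q.1, (q.2, φ q))) K := by
    refine hη.comp_continuousOn ?_
    fun_prop
  obtain ⟨M₀, hM₀⟩ := hK.exists_bound_of_continuousOn hηK
  set M : ℝ≥0 := M₀.toNNReal
  set T : Set (E d₁) := Prod.snd '' K
  have hT : volume T ≠ ∞ := (hK.image continuous_snd).measure_lt_top.ne
  have hTm : MeasurableSet T := (hK.image continuous_snd).isClosed.measurableSet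
  classical
  set ψ := K.piecewise φ 0
  have hψ : Measurable ψ := hφK.measurable_piecewise continuousOn_const hKm
  have hψK : ∀ q ∈ K, ψ q = φ q := fun q hq => Set.piecewise_eq_of_mem _ _ _ hq
  have hmap := map_le φ W K (C₀ + 1) hC hKm (fun q hq => interior_subset (hsub hq).1) ψ hψ hψK
  have hexp : 0 ≤ 1 - 1 / p.toReal := by
    rcases eq_or_ne p ∞ with rfl | hpt
    · simp
    · have : 1 ≤ p.toReal := by
        simpa using ENNReal.toReal_mono hpt hp
      rw [sub_nonneg, div_le_one (by positivity)]
      exact this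
  refine ⟨M * (volume T ^ (1 - 1 / p.toReal)).toNNReal * (C₀ + 1) ^ (p.toReal⁻¹), ?_⟩
  intro f hf0 hf
  have hΦ : Measurable (fun q : E n × E d₁ => (q.2, ψ q)) := by fun_prop
  set g : E n × E d₁ → ℝ := K.indicator (fun q => f (q.2, ψ q)) with hgdef
  have hg : Measurable g := (hf.comp hΦ).indicator hKm
  have h1 := int_bound g hg T p hp (fun x : E n =>
      ∫ t : E d₁, f (t, φ (x, t)) * |η (x, (t, φ (x, t)))|) M ?_
  · have h2 : eLpNorm g p volume ≤ (((C₀ + 1) ^ (p.toReal⁻¹) : ℝ≥0) : ℝ≥0∞) * eLpNorm f p volume := by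
      rw [hgdef, eLpNorm_indicator_eq_eLpNorm_restrict hKm]
      have e := eLpNorm_map_measure (p := p) (μ := volume.restrict K) (g := f)
        (hf.aestronglyMeasurable) hΦ.aemeasurable
      change eLpNorm (f ∘ fun q : E n × E d₁ => (q.2, ψ q)) p _ ≤ _
      rw [← e]
      refine (eLpNorm_mono_measure f hmap).trans ?_
      rw [eLpNorm_smul_measure_of_ne_zero' (by positivity)]
      rfl
    refine h1.trans ?_
    push_cast
    rw [ENNReal.coe_toNNReal (ENNReal.rpow_ne_top_of_nonneg hexp hT)]
    rw [mul_assoc _ _ (eLpNorm f p volume)]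
    gcongr
  · intro x
    refine (enorm_integral_le_lintegral_enorm _).trans ?_
    rw [← lintegral_const_mul _ (by fun_prop), ← lintegral_indicator hTm]
    refine lintegral_mono fun t => ?_
    by_cases hq : (x, t) ∈ K
    · have ht : t ∈ T := ⟨_, hq, rfl⟩
      rw [Set.indicator_of_mem ht, hgdef, Set.indicator_of_mem hq, hψK _ hq, enorm_mul, mul_comm]
      gcongr
      rw [← ofReal_norm_eq_enorm, norm_abs_eq_norm]
      exact ENNReal.ofReal_le_ofReal (hM₀ _ hq)
    · have : η (x, (t, φ (x, t))) = 0 := image_eq_zero_of_notMem_tsupport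
        (f := fun q : E n × E d₁ => η (q.1, (q.2, φ q))) hq
      simp [this]

end Statement16
end
end

section
/- Let G, H, K be Hilbert spaces over ℝ or ℂ, and let T : H → K and R : G → H be bounded linear operators. Then for every integer N ≥ 1, ‖R*T*TR‖ ≤ ‖R*R‖^{1 − 1/N} · ‖R*(T*T)^N R‖^{1/N}, and consequently ‖TR‖ ≤ ‖R‖^{1 − 1/N} · ‖R*(T*T)^N R‖^{1/(2N)}. -/
noncomputable section

open ContinuousLinearMap

theorem moment_aux (a : ℕ → ℝ) (ha : ∀ n, 0 ≤ a n)
    (h : ∀ n, a (n + 1) ^ 2 ≤ a n * a (n + 2)) (n : ℕ) :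
    a 1 ^ (n + 1) ≤ a 0 ^ n * a (n + 1) := by
  have key : ∀ n, a 1 * a n ≤ a 0 * a (n + 1) := by
    intro n
    induction n with
    | zero => simp [mul_comm]
    | succ n ih =>
      rcases (ha (n + 1)).eq_or_lt with h0 | h0
      · rw [← h0, mul_zero]
        exact mul_nonneg (ha _) (ha _)
      · refine le_of_mul_le_mul_right ?_ h0
        calc a 1 * a (n + 1) * a (n + 1) = a 1 * a (n + 1) ^ 2 := by ring
          _ ≤ a 1 * (a n * a (n + 2)) := mul_le_mul_of_nonneg_left (h n) (ha 1)
          _ = a 1 * a n * a (n + 2) := by ring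
          _ ≤ a 0 * a (n + 1) * a (n + 2) := mul_le_mul_of_nonneg_right ih (ha _)
          _ = a 0 * a (n + 1 + 1) * a (n + 1) := by ring
  induction n with
  | zero => simp
  | succ n ih =>
    calc a 1 ^ (n + 1 + 1) = a 1 ^ (n + 1) * a 1 := by ring
      _ ≤ a 0 ^ n * a (n + 1) * a 1 := mul_le_mul_of_nonneg_right ih (ha 1)
      _ = a 0 ^ n * (a 1 * a (n + 1)) := by ring
      _ ≤ a 0 ^ n * (a 0 * a (n + 1 + 1)) :=
        mul_le_mul_of_nonneg_left (key _) (pow_nonneg (ha 0) _)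
      _ = a 0 ^ (n + 1) * a (n + 1 + 1) := by ring

theorem cs_aux {𝕜 G H : Type*} [RCLike 𝕜]
    [NormedAddCommGroup G] [InnerProductSpace 𝕜 G] [CompleteSpace G]
    [NormedAddCommGroup H] [InnerProductSpace 𝕜 H] [CompleteSpace H]
    (X Y : G →L[𝕜] H) :
    ‖adjoint X ∘L Y‖ ^ 2 ≤ ‖adjoint X ∘L X‖ * ‖adjoint Y ∘L Y‖ := by
  rw [norm_adjoint_comp_self, norm_adjoint_comp_self]
  have h := opNorm_comp_le (adjoint X) Y
  rw [LinearIsometryEquiv.norm_map] at h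
  calc ‖adjoint X ∘L Y‖ ^ 2 ≤ (‖X‖ * ‖Y‖) ^ 2 := pow_le_pow_left₀ (norm_nonneg _) h 2
    _ = _ := by ring

theorem real_aux (n : ℕ) (a b c t r : ℝ) (ha : 0 ≤ a) (hb : 0 ≤ b) (hc : 0 ≤ c)
    (ht : 0 ≤ t) (hr : 0 ≤ r) (hm : b ^ (n + 1) ≤ a ^ n * c)
    (htb : t * t = b) (har : a = r * r) :
    b ≤ a ^ ((1 : ℝ) - 1 / (n + 1 : ℕ)) * c ^ ((1 : ℝ) / (n + 1 : ℕ)) ∧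
      t ≤ r ^ ((1 : ℝ) - 1 / (n + 1 : ℕ)) * c ^ ((1 : ℝ) / (2 * (n + 1 : ℕ))) := by
  have hn : ((n + 1 : ℕ) : ℝ) ≠ 0 := by positivity
  have h1 : b ≤ a ^ ((1 : ℝ) - 1 / (n + 1 : ℕ)) * c ^ ((1 : ℝ) / (n + 1 : ℕ)) := by
    have h := Real.rpow_le_rpow (pow_nonneg hb _) hm
      (by positivity : (0 : ℝ) ≤ 1 / (n + 1 : ℕ))
    rw [Real.mul_rpow (pow_nonneg ha _) hc, ← Real.rpow_natCast b, ← Real.rpow_natCast a,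
      ← Real.rpow_mul hb, ← Real.rpow_mul ha, mul_one_div_cancel hn, Real.rpow_one] at h
    have e : (n : ℝ) * (1 / (n + 1 : ℕ)) = 1 - 1 / (n + 1 : ℕ) := by
      field_simp
      push_cast
      ring
    rwa [e] at h
  refine ⟨h1, ?_⟩
  refine (sq_le_sq₀ ht (by positivity)).mp ?_
  have e2 : c ^ ((1 : ℝ) / (n + 1 : ℕ)) = (c ^ ((1 : ℝ) / (2 * (n + 1 : ℕ)))) ^ 2 := by
    rw [← Real.rpow_mul_natCast hc]
    congr 1
    field_simp
    norm_num
  rw [har, Real.mul_rpow hr hr, e2, ← htb] at h1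
  calc t ^ 2 = t * t := by ring
    _ ≤ _ := h1
    _ = _ := by ring

theorem statement18
    {𝕜 G H K : Type*} [RCLike 𝕜]
    [NormedAddCommGroup G] [InnerProductSpace 𝕜 G] [CompleteSpace G]
    [NormedAddCommGroup H] [InnerProductSpace 𝕜 H] [CompleteSpace H]
    [NormedAddCommGroup K] [InnerProductSpace 𝕜 K] [CompleteSpace K]
    (T : H →L[𝕜] K) (R : G →L[𝕜] H) (N : ℕ) (hN : 1 ≤ N) :
    ‖(adjoint R) ∘L ((adjoint T ∘L T) ∘L R)‖ ≤
        ‖(adjoint R) ∘L R‖ ^ ((1 : ℝ) - 1 / N) *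
          ‖(adjoint R) ∘L (((adjoint T ∘L T) ^ N) ∘L R)‖ ^ ((1 : ℝ) / N) ∧
      ‖T ∘L R‖ ≤
        ‖R‖ ^ ((1 : ℝ) - 1 / N) *
          ‖(adjoint R) ∘L (((adjoint T ∘L T) ^ N) ∘L R)‖ ^ ((1 : ℝ) / (2 * N)) := by
  set A : H →L[𝕜] H := adjoint T ∘L T with hA
  have hAsa : adjoint A = A := by simp [hA, adjoint_comp]
  have hApow : ∀ k, adjoint (A ^ k) = A ^ k := by
    intro k
    rw [← star_eq_adjoint, star_pow, star_eq_adjoint, hAsa]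
  have e1 : ∀ k l, adjoint ((A ^ k) ∘L R) ∘L ((A ^ l) ∘L R)
      = adjoint R ∘L ((A ^ (k + l)) ∘L R) := by
    intro k l
    rw [adjoint_comp, hApow, pow_add]
    rfl
  have e2 : ∀ k l, adjoint (T ∘L (A ^ k) ∘L R) ∘L (T ∘L (A ^ l) ∘L R)
      = adjoint R ∘L ((A ^ (k + 1 + l)) ∘L R) := by
    intro k l
    rw [adjoint_comp, adjoint_comp, hApow, pow_add, pow_succ]
    rfl
  have hconv : ∀ n, ‖adjoint R ∘L ((A ^ (n + 1)) ∘L R)‖ ^ 2 ≤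
      ‖adjoint R ∘L ((A ^ n) ∘L R)‖ * ‖adjoint R ∘L ((A ^ (n + 2)) ∘L R)‖ := by
    intro n
    rcases Nat.even_or_odd' n with ⟨k, rfl | rfl⟩
    · have h := cs_aux ((A ^ k) ∘L R) ((A ^ (k + 1)) ∘L R)
      rw [e1, e1, e1] at h
      convert h using 6 <;> ring
    · have h := cs_aux (T ∘L (A ^ k) ∘L R) (T ∘L (A ^ (k + 1)) ∘L R)
      rw [e2, e2, e2] at h
      convert h using 6 <;> ring
  obtain ⟨n, rfl⟩ : ∃ n, N = n + 1 := ⟨N - 1, by omega⟩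
  have hm := moment_aux (fun n => ‖adjoint R ∘L ((A ^ n) ∘L R)‖)
    (fun _ => norm_nonneg _) hconv n
  have h0 : adjoint R ∘L ((A ^ 0) ∘L R) = adjoint R ∘L R := by
    rw [pow_zero]; rfl
  simp only [h0, pow_one] at hm
  have hTR : ‖T ∘L R‖ * ‖T ∘L R‖ = ‖adjoint R ∘L (A ∘L R)‖ := by
    rw [← norm_adjoint_comp_self, adjoint_comp]; rfl
  have hR : ‖adjoint R ∘L R‖ = ‖R‖ * ‖R‖ := norm_adjoint_comp_self R
  have hc := norm_nonneg (adjoint R ∘L ((A ^ (n + 1)) ∘L R))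
  have hb := norm_nonneg (adjoint R ∘L (A ∘L R))
  have ha := norm_nonneg (adjoint R ∘L R)
  exact real_aux n _ _ _ _ _ ha hb hc (norm_nonneg _) (norm_nonneg _) hm hTR hR
end
end
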